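/- Let α,β > −1/2. There exist constants c⁽¹⁾ > 0 and C > 0 depending only on α and β such that for every positive integer L and every θ with π/2 < θ ≤ π − c⁽¹⁾/L, setting L̃ := L + (α+β+2)/2 and θ' := π − θ, |v_L^{(α,β)}(1,cos θ) − (2^{−(α+β+1)}/Γ(α+1)) L̃^{α+1/2} (−1)^L m_{β,α+1}(θ') cos ω_β(L̃θ')| ≤ C (2^{−(α+β+1)}/Γ(α+1)) L̃^{α+1/2} m_{β,α+1}(θ') (sin θ')^{−1} L^{−1}. -/

import Mathlib

open MeasureTheory Real
open scoped ENNReal NNReal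

/-- The classical Jacobi polynomial `P_n^{(a,b)}` (hypergeometric representation,
normalised so that `P_n^{(a,b)}(1) = Γ(n+a+1)/(Γ(n+1)Γ(a+1))`). -/
noncomputable def jacobiP (a b : ℝ) (n : ℕ) (x : ℝ) : ℝ :=
  ∑ s ∈ Finset.range (n + 1),
    (Real.Gamma ((n : ℝ) + a + 1) /
        (Real.Gamma ((s : ℝ) + a + 1) * (Nat.factorial (n - s) : ℝ))) *
      (Real.Gamma ((n : ℝ) + b + 1) /
        (Real.Gamma ((n : ℝ) - (s : ℝ) + b + 1) * (Nat.factorial s : ℝ))) *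
      ((x - 1) / 2) ^ s * ((x + 1) / 2) ^ (n - s)

/-- `M_ℓ^{(a,b)}`, the `L₂(w_{a,b})` normalisation constant of `P_ℓ^{(a,b)}`. -/
noncomputable def jacobiM (a b : ℝ) (ℓ : ℕ) : ℝ :=
  (2 : ℝ) ^ (a + b + 1) / (2 * (ℓ : ℝ) + a + b + 1) *
    (Real.Gamma ((ℓ : ℝ) + a + 1) * Real.Gamma ((ℓ : ℝ) + b + 1)) /
    (Real.Gamma ((ℓ : ℝ) + 1) * Real.Gamma ((ℓ : ℝ) + a + b + 1))

/-- The generalised Dirichlet kernel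
`v_L^{(a,b)}(t,s) = Σ_{ℓ=0}^{L} (M_ℓ^{(a,b)})⁻¹ P_ℓ^{(a,b)}(t) P_ℓ^{(a,b)}(s)`. -/
noncomputable def dirichletJ (a b : ℝ) (L : ℕ) (t s : ℝ) : ℝ :=
  ∑ ℓ ∈ Finset.range (L + 1), (jacobiM a b ℓ)⁻¹ * jacobiP a b ℓ t * jacobiP a b ℓ s

/-- The filtered Jacobi kernel
`v_{L,g}^{(a,b)}(t,s) = Σ_{ℓ=0}^{2L−1} g(ℓ/L) (M_ℓ^{(a,b)})⁻¹ P_ℓ^{(a,b)}(t) P_ℓ^{(a,b)}(s)`. -/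
noncomputable def filteredJ (a b : ℝ) (g : ℝ → ℝ) (L : ℕ) (t s : ℝ) : ℝ :=
  ∑ ℓ ∈ Finset.range (2 * L),
    g ((ℓ : ℝ) / (L : ℝ)) * (jacobiM a b ℓ)⁻¹ * jacobiP a b ℓ t * jacobiP a b ℓ s

/-- `Z(d,ℓ)`, the dimension of the space of spherical harmonics of degree `ℓ` on `S^d`. -/
noncomputable def Zdim (d ℓ : ℕ) : ℝ :=
  (2 * (ℓ : ℝ) + (d : ℝ) - 1) * Real.Gamma ((ℓ : ℝ) + (d : ℝ) - 1) /
    (Real.Gamma (d : ℝ) * Real.Gamma ((ℓ : ℝ) + 1))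

/-- The normalised Legendre polynomial `P_ℓ^{(d+1)}` for `S^d`. -/
noncomputable def normLegendre (d ℓ : ℕ) (t : ℝ) : ℝ :=
  jacobiP (((d : ℝ) - 2) / 2) (((d : ℝ) - 2) / 2) ℓ t /
    jacobiP (((d : ℝ) - 2) / 2) (((d : ℝ) - 2) / 2) ℓ 1

/-- The Dirichlet kernel on `S^d`: `v_L^{(d)}(t) = Σ_{ℓ=0}^L Z(d,ℓ) P_ℓ^{(d+1)}(t)`. -/
noncomputable def sphDirichlet (d L : ℕ) (t : ℝ) : ℝ :=
  ∑ ℓ ∈ Finset.range (L + 1), Zdim d ℓ * normLegendre d ℓ t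

/-- The filtered kernel on `S^d`: `v_{L,g}^{(d)}(t) = Σ_{ℓ=0}^∞ g(ℓ/L) Z(d,ℓ) P_ℓ^{(d+1)}(t)`. -/
noncomputable def sphFiltered (d : ℕ) (g : ℝ → ℝ) (L : ℕ) (t : ℝ) : ℝ :=
  ∑' ℓ : ℕ, g ((ℓ : ℝ) / (L : ℝ)) * Zdim d ℓ * normLegendre d ℓ t

/-- The surface area `|S^n| = 2π^{(n+1)/2}/Γ((n+1)/2)` of the unit sphere `S^n`. -/
noncomputable def sphereArea (n : ℕ) : ℝ :=
  2 * Real.pi ^ (((n : ℝ) + 1) / 2) / Real.Gamma (((n : ℝ) + 1) / 2)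

/-- `m_{a,b}(θ) = π^{−1/2} (sin(θ/2))^{−a−1/2} (cos(θ/2))^{−b−1/2}`. -/
noncomputable def mAB (a b θ : ℝ) : ℝ :=
  Real.pi ^ (-(1 / 2 : ℝ)) * Real.sin (θ / 2) ^ (-a - 1 / 2) *
    Real.cos (θ / 2) ^ (-b - 1 / 2)

/-- `ω_γ(z) = z − γπ/2 − π/4`. -/
noncomputable def omegaA (γ z : ℝ) : ℝ := z - γ * Real.pi / 2 - Real.pi / 4

namespace JacAux

/-- coefficient of `y^s w^k` in `P_{s+k}^{(a,b)}`. -/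
noncomputable def cf (a b : ℝ) (s k : ℕ) : ℝ :=
  (Real.Gamma ((s : ℝ) + k + a + 1) / (Real.Gamma ((s : ℝ) + a + 1) * (Nat.factorial k : ℝ))) *
  (Real.Gamma ((s : ℝ) + k + b + 1) / (Real.Gamma ((k : ℝ) + b + 1) * (Nat.factorial s : ℝ)))

lemma jacobiP_eq (a b : ℝ) (n : ℕ) (x : ℝ) :
    jacobiP a b n x = ∑ p ∈ Finset.HasAntidiagonal.antidiagonal n,
      cf a b p.1 p.2 * ((x - 1) / 2) ^ p.1 * ((x + 1) / 2) ^ p.2 := by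
  rw [Finset.Nat.sum_antidiagonal_eq_sum_range_succ
    (fun s k => cf a b s k * ((x - 1) / 2) ^ s * ((x + 1) / 2) ^ k)]
  unfold jacobiP cf
  refine Finset.sum_congr rfl fun s hs => ?_
  have hs' : s ≤ n := by simpa [Nat.lt_succ_iff] using hs
  rw [Nat.cast_sub hs']
  congr 5 <;> ring_nf

lemma Gamma_succ' {x : ℝ} (hx : 0 < x) : Real.Gamma (x + 1) = x * Real.Gamma x :=
  Real.Gamma_add_one hx.ne'

lemma jacobiP_refl (a b : ℝ) (n : ℕ) (x : ℝ) :
    jacobiP a b n (-x) = (-1) ^ n * jacobiP b a n x := by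
  rw [jacobiP_eq, jacobiP_eq, ← Finset.Nat.sum_antidiagonal_swap, Finset.mul_sum]
  refine Finset.sum_congr rfl fun p hp => ?_
  have hp' : p.1 + p.2 = n := by simpa using hp
  have h1 : (-x - 1) / 2 = (-1) * ((x + 1) / 2) := by ring
  have h2 : (-x + 1) / 2 = (-1) * ((x - 1) / 2) := by ring
  have h3 : cf a b p.2 p.1 = cf b a p.1 p.2 := by
    unfold cf
    rw [add_comm (p.2 : ℝ) (p.1 : ℝ)]
    ring
  simp only [Prod.fst_swap, Prod.snd_swap]
  rw [h1, h2, mul_pow, mul_pow, h3, ← hp', pow_add]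
  ring

lemma cf_lower {a b : ℝ} (ha : -1 < a) (hb : -1 < b) (s k : ℕ) :
    cf a b (s + 1) k * (s + 1) + cf a b s (k + 1) * (k + 1)
      = ((s : ℝ) + k + 1 + a + b + 1) * cf (a + 1) (b + 1) s k := by
  unfold cf
  have hs : (0 : ℝ) ≤ s := Nat.cast_nonneg s
  have hk : (0 : ℝ) ≤ k := Nat.cast_nonneg k
  have e1 : Real.Gamma ((s : ℝ) + a + 1 + 1) = (s + a + 1) * Real.Gamma (s + a + 1) :=
    Gamma_succ' (by linarith)
  have e2 : Real.Gamma ((k : ℝ) + b + 1 + 1) = (k + b + 1) * Real.Gamma (k + b + 1) :=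
    Gamma_succ' (by linarith)
  have p1 : 0 < Real.Gamma ((s : ℝ) + a + 1) := Real.Gamma_pos_of_pos (by linarith)
  have p2 : 0 < Real.Gamma ((k : ℝ) + b + 1) := Real.Gamma_pos_of_pos (by linarith)
  have q1 : (0:ℝ) < s + a + 1 := by linarith
  have q2 : (0:ℝ) < k + b + 1 := by linarith
  have f1 : (0:ℝ) < (s.factorial : ℝ) := by positivity
  have f2 : (0:ℝ) < (k.factorial : ℝ) := by positivity
  push_cast [Nat.factorial_succ]
  rw [show (s : ℝ) + 1 + k + a + 1 = s + k + a + 1 + 1 by ring,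
    show (s : ℝ) + 1 + k + b + 1 = s + k + b + 1 + 1 by ring,
    show (s : ℝ) + (k + 1) + a + 1 = s + k + a + 1 + 1 by ring,
    show (s : ℝ) + (k + 1) + b + 1 = s + k + b + 1 + 1 by ring,
    show (s : ℝ) + k + (a + 1) + 1 = s + k + a + 1 + 1 by ring,
    show (s : ℝ) + k + (b + 1) + 1 = s + k + b + 1 + 1 by ring,
    show (s : ℝ) + (a + 1) + 1 = s + a + 1 + 1 by ring,
    show (k : ℝ) + (b + 1) + 1 = k + b + 1 + 1 by ring,
    show (s : ℝ) + 1 + a + 1 = s + a + 1 + 1 by ring,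
    show (k : ℝ) + 1 + b + 1 = k + b + 1 + 1 by ring, e1, e2]
  field_simp
  ring

/-- raising coefficient identities -/
lemma cf_raise1 {a b : ℝ} (ha : -1 < a) (hb : -1 < b) (s k : ℕ) :
    cf (a + 1) (b + 1) s k * (s + a + 1) = (k + 1) * cf a b s (k + 1) := by
  unfold cf
  have hs : (0 : ℝ) ≤ s := Nat.cast_nonneg s
  have hk : (0 : ℝ) ≤ k := Nat.cast_nonneg k
  have e1 : Real.Gamma ((s : ℝ) + a + 1 + 1) = (s + a + 1) * Real.Gamma (s + a + 1) :=
    Gamma_succ' (by linarith)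
  have p1 : 0 < Real.Gamma ((s : ℝ) + a + 1) := Real.Gamma_pos_of_pos (by linarith)
  have p2 : 0 < Real.Gamma ((k : ℝ) + b + 1 + 1) := Real.Gamma_pos_of_pos (by linarith)
  have q1 : (0:ℝ) < s + a + 1 := by linarith
  have f1 : (0:ℝ) < (s.factorial : ℝ) := by positivity
  have f2 : (0:ℝ) < (k.factorial : ℝ) := by positivity
  push_cast [Nat.factorial_succ]
  rw [show (s : ℝ) + (k + 1) + a + 1 = s + k + a + 1 + 1 by ring,
    show (s : ℝ) + (k + 1) + b + 1 = s + k + b + 1 + 1 by ring,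
    show (s : ℝ) + k + (a + 1) + 1 = s + k + a + 1 + 1 by ring,
    show (s : ℝ) + k + (b + 1) + 1 = s + k + b + 1 + 1 by ring,
    show (s : ℝ) + (a + 1) + 1 = s + a + 1 + 1 by ring,
    show (k : ℝ) + (b + 1) + 1 = k + b + 1 + 1 by ring,
    show (k : ℝ) + 1 + b + 1 = k + b + 1 + 1 by ring, e1]
  field_simp

lemma cf_raise2 {a b : ℝ} (ha : -1 < a) (hb : -1 < b) (s k : ℕ) :
    cf (a + 1) (b + 1) s k * (k + b + 1) = (s + 1) * cf a b (s + 1) k := by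
  have h1 := cf_lower ha hb s k
  have h2 := cf_raise1 ha hb s k
  linear_combination -h1 - h2

lemma cf_cont {a b : ℝ} (ha : -1 < a) (s k : ℕ) :
    cf (a + 1) b s k * (s + a + 1) = (s + k + a + 1) * cf a b s k := by
  unfold cf
  have hs : (0 : ℝ) ≤ s := Nat.cast_nonneg s
  have hk : (0 : ℝ) ≤ k := Nat.cast_nonneg k
  have e1 : Real.Gamma ((s : ℝ) + a + 1 + 1) = (s + a + 1) * Real.Gamma (s + a + 1) :=
    Gamma_succ' (by linarith)
  have e2 : Real.Gamma ((s : ℝ) + k + a + 1 + 1) = (s + k + a + 1) * Real.Gamma (s + k + a + 1) :=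
    Gamma_succ' (by linarith)
  have p1 : 0 < Real.Gamma ((s : ℝ) + a + 1) := Real.Gamma_pos_of_pos (by linarith)
  have q1 : (0:ℝ) < s + a + 1 := by linarith
  rw [show (s : ℝ) + k + (a + 1) + 1 = s + k + a + 1 + 1 by ring,
    show (s : ℝ) + (a + 1) + 1 = s + a + 1 + 1 by ring, e1, e2]
  field_simp

lemma cf_cont1 {a b : ℝ} (ha : -1 < a) (hb : -1 < b) (s k : ℕ) :
    cf (a + 1) b s k * (s + k + 1 + b) * (s + a + 1) = (k + 1) * (k + 1 + b) * cf a b s (k + 1) := by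
  unfold cf
  have hs : (0 : ℝ) ≤ s := Nat.cast_nonneg s
  have hk : (0 : ℝ) ≤ k := Nat.cast_nonneg k
  have e1 : Real.Gamma ((s : ℝ) + a + 1 + 1) = (s + a + 1) * Real.Gamma (s + a + 1) :=
    Gamma_succ' (by linarith)
  have e2 : Real.Gamma ((s : ℝ) + k + b + 1 + 1) = (s + k + b + 1) * Real.Gamma (s + k + b + 1) :=
    Gamma_succ' (by linarith)
  have e3 : Real.Gamma ((k : ℝ) + b + 1 + 1) = (k + b + 1) * Real.Gamma (k + b + 1) :=
    Gamma_succ' (by linarith)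
  have p1 : 0 < Real.Gamma ((s : ℝ) + a + 1) := Real.Gamma_pos_of_pos (by linarith)
  have p2 : 0 < Real.Gamma ((k : ℝ) + b + 1) := Real.Gamma_pos_of_pos (by linarith)
  have q1 : (0:ℝ) < s + a + 1 := by linarith
  have q2 : (0:ℝ) < k + b + 1 := by linarith
  have f1 : (0:ℝ) < (s.factorial : ℝ) := by positivity
  have f2 : (0:ℝ) < (k.factorial : ℝ) := by positivity
  push_cast [Nat.factorial_succ]
  rw [show (s : ℝ) + k + (a + 1) + 1 = s + k + a + 1 + 1 by ring,
    show (s : ℝ) + (k + 1) + a + 1 = s + k + a + 1 + 1 by ring,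
    show (s : ℝ) + (k + 1) + b + 1 = s + k + b + 1 + 1 by ring,
    show (k : ℝ) + 1 + b + 1 = k + b + 1 + 1 by ring,
    show (s : ℝ) + (a + 1) + 1 = s + a + 1 + 1 by ring, e1, e2, e3]
  field_simp
  ring

lemma cf_cont2 {a b : ℝ} (ha : -1 < a) (hb : -1 < b) (s k : ℕ) :
    cf (a + 1) b s k * (s + k + 1 + b) = (s + 1) * cf a b (s + 1) k := by
  unfold cf
  have hs : (0 : ℝ) ≤ s := Nat.cast_nonneg s
  have hk : (0 : ℝ) ≤ k := Nat.cast_nonneg k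
  have e2 : Real.Gamma ((s : ℝ) + k + b + 1 + 1) = (s + k + b + 1) * Real.Gamma (s + k + b + 1) :=
    Gamma_succ' (by linarith)
  have p1 : 0 < Real.Gamma ((s : ℝ) + a + 1 + 1) := Real.Gamma_pos_of_pos (by linarith)
  have p2 : 0 < Real.Gamma ((k : ℝ) + b + 1) := Real.Gamma_pos_of_pos (by linarith)
  have f1 : (0:ℝ) < (s.factorial : ℝ) := by positivity
  have f2 : (0:ℝ) < (k.factorial : ℝ) := by positivity
  push_cast [Nat.factorial_succ]
  rw [show (s : ℝ) + k + (a + 1) + 1 = s + k + a + 1 + 1 by ring,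
    show (s : ℝ) + 1 + k + a + 1 = s + k + a + 1 + 1 by ring,
    show (s : ℝ) + 1 + k + b + 1 = s + k + b + 1 + 1 by ring,
    show (s : ℝ) + 1 + a + 1 = s + a + 1 + 1 by ring,
    show (s : ℝ) + (a + 1) + 1 = s + a + 1 + 1 by ring, e2]
  field_simp
  ring

open Finset in
lemma jacobi_contig {a b : ℝ} (ha : -1 < a) (hb : -1 < b) (m : ℕ) (x : ℝ) :
    (2 * ((m : ℝ) + 1) + a + b + 1) * jacobiP a b (m + 1) x
      = ((m : ℝ) + 1 + a + b + 1) * jacobiP (a + 1) b (m + 1) x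
        - ((m : ℝ) + 1 + b) * jacobiP (a + 1) b m x := by
  set y := (x - 1) / 2 with hy
  set w := (x + 1) / 2 with hw
  have hwy : w - y = 1 := by rw [hy, hw]; ring
  have key : ((m : ℝ) + 1 + b) * jacobiP (a + 1) b m x
      = ∑ p ∈ antidiagonal (m + 1), (cf a b p.1 p.2 * p.2 * (p.2 + b) / (p.1 + a + 1)) * y ^ p.1 * w ^ p.2
        - ∑ p ∈ antidiagonal (m + 1), (p.1 * cf a b p.1 p.2) * y ^ p.1 * w ^ p.2 := by
    rw [Finset.Nat.sum_antidiagonal_succ']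
    rw [Finset.Nat.sum_antidiagonal_succ]
    simp only [Nat.cast_zero, mul_zero, zero_mul, zero_div, zero_add, add_zero]
    rw [← Finset.sum_sub_distrib, jacobiP_eq, ← hy, ← hw]
    rw [show ∀ S : ℝ, ((m : ℝ) + 1 + b) * S = ((m : ℝ) + 1 + b) * S * (w - y) by
      intro S; rw [hwy, mul_one], mul_sum, sum_mul]
    refine sum_congr rfl fun p hp => ?_
    have hp' : (p.1 : ℝ) + p.2 = m := by
      have : p.1 + p.2 = m := by simpa using hp
      exact_mod_cast this
    have q1 : (0:ℝ) < p.1 + a + 1 := by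
      have : (0 : ℝ) ≤ p.1 := Nat.cast_nonneg _
      linarith
    have h1 := cf_cont1 ha hb p.1 p.2
    have h2 := cf_cont2 ha hb p.1 p.2
    have h1' : cf a b p.1 (p.2 + 1) * ((p.2 + 1 : ℕ) : ℝ) * (((p.2 + 1 : ℕ) : ℝ) + b) / (p.1 + a + 1)
      = cf (a + 1) b p.1 p.2 * (p.1 + p.2 + 1 + b) := by
      rw [div_eq_iff q1.ne', h1]; push_cast; ring
    have h2' : ((p.1 + 1 : ℕ) : ℝ) * cf a b (p.1 + 1) p.2 = cf (a + 1) b p.1 p.2 * (p.1 + p.2 + 1 + b) := by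
      rw [h2]; push_cast; ring
    rw [h1', h2', ← hp']
    ring
  rw [key, jacobiP_eq, jacobiP_eq, ← hy, ← hw, mul_sum, mul_sum, ← sum_sub_distrib, ← sum_sub_distrib]
  refine sum_congr rfl fun p hp => ?_
  have hp' : (p.1 : ℝ) + p.2 = m + 1 := by
    have : p.1 + p.2 = m + 1 := by simpa using hp
    exact_mod_cast this
  have q1 : (0:ℝ) < p.1 + a + 1 := by
    have : (0 : ℝ) ≤ p.1 := Nat.cast_nonneg _
    linarith
  have h1 : cf (a + 1) b p.1 p.2 = (p.1 + p.2 + a + 1) * cf a b p.1 p.2 / (p.1 + a + 1) := by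
    rw [eq_div_iff q1.ne', cf_cont ha]
  rw [h1, ← hp']
  field_simp
  ring

open Finset in
/-- termwise derivative -/
lemma jacobi_hasDeriv (a b : ℝ) (m : ℕ) (x : ℝ) :
    HasDerivAt (jacobiP a b (m + 1))
      ((1 / 2) * ∑ p ∈ antidiagonal m,
        (cf a b (p.1 + 1) p.2 * (p.1 + 1) + cf a b p.1 (p.2 + 1) * (p.2 + 1)) *
          ((x - 1) / 2) ^ p.1 * ((x + 1) / 2) ^ p.2) x := by
  have h0 : jacobiP a b (m + 1) = fun x => ∑ p ∈ antidiagonal (m + 1),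
      cf a b p.1 p.2 * (((x - 1) / 2) ^ p.1 * ((x + 1) / 2) ^ p.2) := by
    funext x; rw [jacobiP_eq]; exact sum_congr rfl fun p _ => by ring
  rw [h0]
  have hy : HasDerivAt (fun x : ℝ => (x - 1) / 2) (1 / 2) x :=
    ((hasDerivAt_id x).sub_const 1).div_const 2
  have hw : HasDerivAt (fun x : ℝ => (x + 1) / 2) (1 / 2) x :=
    ((hasDerivAt_id x).add_const 1).div_const 2
  have h1 : HasDerivAt (fun x => ∑ p ∈ antidiagonal (m + 1),
      cf a b p.1 p.2 * (((x - 1) / 2) ^ p.1 * ((x + 1) / 2) ^ p.2))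
      (∑ p ∈ antidiagonal (m + 1), cf a b p.1 p.2 *
        ((p.1 * ((x - 1) / 2) ^ (p.1 - 1) * (1 / 2)) * ((x + 1) / 2) ^ p.2
          + ((x - 1) / 2) ^ p.1 * (p.2 * ((x + 1) / 2) ^ (p.2 - 1) * (1 / 2)))) x := by
    refine HasDerivAt.fun_sum fun p _ => ?_
    exact ((hy.pow p.1).mul (hw.pow p.2)).const_mul _
  refine h1.congr_deriv ?_
  conv_lhs => simp only [mul_add, sum_add_distrib]
  rw [Finset.Nat.sum_antidiagonal_succ (n := m)]
  rw [Finset.Nat.sum_antidiagonal_succ' (n := m)]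
  simp only [Nat.cast_zero, mul_zero, zero_mul, zero_add, add_zero, Nat.add_sub_cancel]
  rw [← sum_add_distrib, mul_sum]
  refine sum_congr rfl fun p _ => ?_
  push_cast; ring

lemma jacobi_lower {a b : ℝ} (ha : -1 < a) (hb : -1 < b) (m : ℕ) (x : ℝ) :
    HasDerivAt (jacobiP a b (m + 1))
      (((m : ℝ) + 1 + a + b + 1) / 2 * jacobiP (a + 1) (b + 1) m x) x := by
  refine (jacobi_hasDeriv a b m x).congr_deriv ?_
  rw [jacobiP_eq, Finset.mul_sum, Finset.mul_sum]
  refine Finset.sum_congr rfl fun p hp => ?_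
  have hp' : (p.1 : ℝ) + p.2 = m := by
    have : p.1 + p.2 = m := by simpa using hp
    exact_mod_cast this
  rw [cf_lower ha hb, hp']
  ring

open Finset in
lemma jacobi_raise {a b : ℝ} (ha : -1 < a) (hb : -1 < b) (m : ℕ) (x : ℝ) :
    ∃ d, HasDerivAt (jacobiP (a + 1) (b + 1) m) d x ∧
      (1 - x ^ 2) * d = ((a + 1) * (1 + x) - (b + 1) * (1 - x)) * jacobiP (a + 1) (b + 1) m x
        - 2 * ((m : ℝ) + 1) * jacobiP a b (m + 1) x := by
  have h0 : jacobiP (a + 1) (b + 1) m = fun x => ∑ p ∈ antidiagonal m,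
      cf (a + 1) (b + 1) p.1 p.2 * (((x - 1) / 2) ^ p.1 * ((x + 1) / 2) ^ p.2) := by
    funext x; rw [jacobiP_eq]; exact sum_congr rfl fun p _ => by ring
  have hy : HasDerivAt (fun x : ℝ => (x - 1) / 2) (1 / 2) x :=
    ((hasDerivAt_id x).sub_const 1).div_const 2
  have hw : HasDerivAt (fun x : ℝ => (x + 1) / 2) (1 / 2) x :=
    ((hasDerivAt_id x).add_const 1).div_const 2
  have h1 : HasDerivAt (fun x => ∑ p ∈ antidiagonal m,
      cf (a + 1) (b + 1) p.1 p.2 * (((x - 1) / 2) ^ p.1 * ((x + 1) / 2) ^ p.2))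
      (∑ p ∈ antidiagonal m, cf (a + 1) (b + 1) p.1 p.2 *
        ((p.1 * ((x - 1) / 2) ^ (p.1 - 1) * (1 / 2)) * ((x + 1) / 2) ^ p.2
          + ((x - 1) / 2) ^ p.1 * (p.2 * ((x + 1) / 2) ^ (p.2 - 1) * (1 / 2)))) x := by
    refine HasDerivAt.fun_sum fun p _ => ?_
    exact ((hy.pow p.1).mul (hw.pow p.2)).const_mul _
  refine ⟨_, h0 ▸ h1, ?_⟩
  have key : ((m : ℝ) + 1) * jacobiP a b (m + 1) x
      = ∑ p ∈ antidiagonal (m + 1), (p.2 * cf a b p.1 p.2) * ((x - 1) / 2) ^ p.1 * ((x + 1) / 2) ^ p.2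
        + ∑ p ∈ antidiagonal (m + 1), (p.1 * cf a b p.1 p.2) * ((x - 1) / 2) ^ p.1 * ((x + 1) / 2) ^ p.2 := by
    rw [jacobiP_eq, mul_sum, ← sum_add_distrib]
    refine sum_congr rfl fun p hp => ?_
    have hp' : (p.1 : ℝ) + p.2 = m + 1 := by
      have : p.1 + p.2 = m + 1 := by simpa using hp
      exact_mod_cast this
    rw [← hp']; ring
  rw [Finset.Nat.sum_antidiagonal_succ', Finset.Nat.sum_antidiagonal_succ] at key
  simp only [Nat.cast_zero, mul_zero, zero_mul, zero_add, add_zero] at key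
  rw [← sum_add_distrib] at key
  rw [mul_assoc 2, key, h0]
  simp only [mul_sum]
  rw [← sum_sub_distrib]
  refine sum_congr rfl fun p hp => ?_
  have h1 := cf_raise1 ha hb p.1 p.2
  have h2 := cf_raise2 ha hb p.1 p.2
  push_cast
  rw [← h1, ← h2]
  have e1 : (p.1 : ℝ) * ((x - 1) / 2) ^ (p.1 - 1) * ((x - 1) / 2) = p.1 * ((x - 1) / 2) ^ p.1 := by
    rcases p.1 with _ | j
    · simp
    · simp only [Nat.add_sub_cancel, pow_succ]; ring
  have e2 : (p.2 : ℝ) * ((x + 1) / 2) ^ (p.2 - 1) * ((x + 1) / 2) = p.2 * ((x + 1) / 2) ^ p.2 := by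
    rcases p.2 with _ | j
    · simp
    · simp only [Nat.add_sub_cancel, pow_succ]; ring
  rw [pow_succ, pow_succ]
  linear_combination (-2) * cf (a + 1) (b + 1) p.1 p.2 * ((x + 1) / 2) * ((x + 1) / 2) ^ p.2 * e1
    + (-2) * cf (a + 1) (b + 1) p.1 p.2 * ((x - 1) / 2) * ((x - 1) / 2) ^ p.1 * e2

lemma jacobiP_one {a b : ℝ} (hb : -1 < b) (n : ℕ) :
    jacobiP a b n 1 = Real.Gamma (n + a + 1) / (Real.Gamma (a + 1) * n.factorial) := by
  rw [jacobiP_eq, Finset.sum_eq_single (0, n)]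
  · have p2 : 0 < Real.Gamma ((n : ℝ) + b + 1) := Real.Gamma_pos_of_pos (by
      have : (0:ℝ) ≤ n := Nat.cast_nonneg n
      linarith)
    simp only [cf]
    norm_num
    rw [div_self p2.ne', mul_one]
  · intro p hp hne
    have hp' : p.1 + p.2 = n := by simpa using hp
    have : p.1 ≠ 0 := by
      intro h0; apply hne; ext <;> simp <;> omega
    simp [this]
  · simp

lemma dirichlet_closed {α β : ℝ} (hα : -(1 / 2 : ℝ) < α) (hβ : -(1 / 2 : ℝ) < β) (L : ℕ) (x : ℝ) :
    dirichletJ α β L 1 x = (2 : ℝ) ^ (-(α + β + 1)) / Real.Gamma (α + 1) *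
      (Real.Gamma (L + α + β + 2) / Real.Gamma (L + β + 1)) * jacobiP (α + 1) β L x := by
  have h2 : (0:ℝ) < (2:ℝ) ^ (α + β + 1) := by positivity
  have gα : 0 < Real.Gamma (α + 1) := Real.Gamma_pos_of_pos (by linarith)
  induction L with
  | zero =>
    have gβ : 0 < Real.Gamma (β + 1) := Real.Gamma_pos_of_pos (by linarith)
    have gαβ : 0 < Real.Gamma (α + β + 1) := Real.Gamma_pos_of_pos (by linarith)
    have gα2 : 0 < Real.Gamma (α + 1 + 1) := Real.Gamma_pos_of_pos (by linarith)
    have hs : 0 < α + β + 1 := by linarith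
    have e1 : Real.Gamma (α + β + 2) = (α + β + 1) * Real.Gamma (α + β + 1) := by
      rw [← Gamma_succ' hs]; congr 1; ring
    rw [Real.rpow_neg (by norm_num)]
    simp [dirichletJ, jacobiM, jacobiP]
    rw [e1]
    field_simp
  | succ m ih =>
    have hm : (0:ℝ) ≤ m := Nat.cast_nonneg m
    unfold dirichletJ at ih ⊢
    rw [Finset.sum_range_succ, ih, jacobiP_one (by linarith)]
    have hc := jacobi_contig (a := α) (b := β) (by linarith) (by linarith) m x
    have hpos : 0 < 2 * ((m : ℝ) + 1) + α + β + 1 := by linarith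
    have hP : jacobiP α β (m + 1) x = (((m : ℝ) + 1 + α + β + 1) * jacobiP (α + 1) β (m + 1) x
        - ((m : ℝ) + 1 + β) * jacobiP (α + 1) β m x) / (2 * ((m : ℝ) + 1) + α + β + 1) := by
      rw [eq_div_iff hpos.ne', ← hc]; ring
    rw [hP]
    unfold jacobiM
    have e1 : Real.Gamma ((m : ℝ) + 1 + β + 1) = (m + 1 + β) * Real.Gamma (m + β + 1) := by
      rw [Gamma_succ' (by linarith)]; congr 2; ring
    have e2 : Real.Gamma ((m : ℝ) + 1 + α + β + 2)
        = (m + α + β + 2) * Real.Gamma (m + α + β + 2) := by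
      rw [← Gamma_succ' (by linarith)]; congr 1; ring
    have e3 : Real.Gamma ((m : ℝ) + 1 + α + β + 1) = Real.Gamma (m + α + β + 2) := by
      congr 1; ring
    have e4 : Real.Gamma ((m : ℝ) + 1 + 1) = ((m + 1).factorial : ℝ) := by
      have := Real.Gamma_nat_eq_factorial (m + 1)
      push_cast at this; exact this
    have g1 : 0 < Real.Gamma ((m : ℝ) + β + 1) := Real.Gamma_pos_of_pos (by linarith)
    have g2 : 0 < Real.Gamma ((m : ℝ) + α + β + 2) := Real.Gamma_pos_of_pos (by linarith)
    have g3 : 0 < Real.Gamma ((m : ℝ) + 1 + α + 1) := Real.Gamma_pos_of_pos (by linarith)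
    have f1 : (0:ℝ) < ((m + 1).factorial : ℝ) := by positivity
    have k1 : (0:ℝ) < m + 1 + β := by linarith
    rw [Real.rpow_neg (by norm_num)]
    push_cast
    rw [e1, e2, e3, e4]
    field_simp
    ring

end JacAux

namespace JacAux

open Complex in
lemma iterDeriv_one_add (A : ℝ) (k : ℕ) (hk : (k:ℝ) < A + 1) :
    ∀ z ∈ Metric.ball (0:ℂ) 1, iteratedDeriv k (fun z : ℂ => (1 + z) ^ (A : ℂ)) z
      = ((Real.Gamma (A + 1) / Real.Gamma (A - k + 1) : ℝ) : ℂ) * (1 + z) ^ ((A : ℂ) - k) := by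
  induction k with
  | zero =>
    intro z hz
    have : 0 < Real.Gamma (A + 1) := Real.Gamma_pos_of_pos (by simpa using hk)
    simp [div_self this.ne']
  | succ k ih =>
    intro z hz
    push_cast at hk
    have ih' := ih (by linarith)
    rw [iteratedDeriv_succ]
    have he : iteratedDeriv k (fun z : ℂ => (1 + z) ^ (A : ℂ)) =ᶠ[nhds z]
        fun z => ((Real.Gamma (A + 1) / Real.Gamma (A - k + 1) : ℝ) : ℂ) * (1 + z) ^ ((A : ℂ) - k) := by
      filter_upwards [Metric.isOpen_ball.mem_nhds hz] with w hw using ih' w hw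
    rw [he.deriv_eq]
    have hs : 1 + z ∈ slitPlane := Complex.mem_slitPlane_of_norm_lt_one (by simpa using hz)
    have hd : HasDerivAt (fun z : ℂ => (1 + z) ^ ((A : ℂ) - k))
        (((A : ℂ) - k) * (1 + z) ^ ((A : ℂ) - k - 1) * 1) z :=
      ((hasDerivAt_id z).const_add 1).cpow_const hs
    rw [(hd.const_mul _).deriv]
    have e1 : Real.Gamma (A - k + 1) = (A - k) * Real.Gamma (A - (k + 1 : ℕ) + 1) := by
      rw [show A - (k + 1 : ℕ) + 1 = A - k by push_cast; ring]
      exact Real.Gamma_add_one (by linarith)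
    have g1 : 0 < Real.Gamma (A - (k + 1 : ℕ) + 1) :=
      Real.Gamma_pos_of_pos (by push_cast; linarith)
    have hAk : 0 < A - k := by linarith
    have e2 : Real.Gamma (A + 1) / Real.Gamma (A - k + 1) * (A - k)
        = Real.Gamma (A + 1) / Real.Gamma (A - (k + 1 : ℕ) + 1) := by
      rw [e1]; field_simp
    rw [← e2, show (A : ℂ) - (k + 1 : ℕ) = (A : ℂ) - k - 1 by push_cast; ring]
    push_cast
    ring

lemma coeff_zero {a b : ℝ} (ha : -1 < a) (hb : -1 < b) (n : ℕ) :
    iteratedDeriv n (fun z : ℂ => (1 - z) ^ ((n + b : ℝ) : ℂ) * (1 + z) ^ ((n + a : ℝ) : ℂ)) 0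
      = (n.factorial * 2 ^ n * jacobiP a b n 0 : ℝ) := by
  have hc : ∀ A : ℂ, ContDiffAt ℂ n (fun z : ℂ => (1 + z) ^ A) 0 := by
    intro A
    have h := (Complex.one_add_cpow_hasFPowerSeriesAt_zero (a := A)).analyticAt
    exact h.contDiffAt
  have hc' : ∀ A : ℂ, ContDiffAt ℂ n (fun z : ℂ => (1 - z) ^ A) 0 := by
    intro A
    have h := hc A
    have h2 : ContDiffAt ℂ n (fun z : ℂ => -z) 0 := contDiff_neg.contDiffAt
    have h3 : ContDiffAt ℂ n ((fun z : ℂ => (1 + z) ^ A) ∘ (fun z : ℂ => -z)) 0 :=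
      ContDiffAt.comp 0 (by simpa using h) h2
    exact h3.congr_of_eventuallyEq (Filter.Eventually.of_forall fun z => by simp [sub_eq_add_neg])
  rw [iteratedDeriv_fun_mul (hc' _) (hc _)]
  unfold jacobiP
  rw [Finset.mul_sum]
  push_cast
  refine Finset.sum_congr rfl fun s hs => ?_
  have hs' : s ≤ n := by simpa [Nat.lt_succ_iff] using hs
  have hsr : (s:ℝ) ≤ n := by exact_mod_cast hs'
  have hs0 : (0:ℝ) ≤ s := Nat.cast_nonneg s
  have e1 : iteratedDeriv s (fun z : ℂ => (1 - z) ^ ((n:ℂ) + b)) 0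
      = (-1) ^ s * ((Real.Gamma (n + b + 1) / Real.Gamma (n - s + b + 1) : ℝ) : ℂ) := by
    have h1 := iteratedDeriv_comp_neg s (fun z : ℂ => (1 + z) ^ (((n + b : ℝ)) : ℂ)) 0
    rw [neg_zero, iterDeriv_one_add (n + b) s (by linarith) 0 (by simp)] at h1
    simp only [← sub_eq_add_neg, add_zero, Complex.one_cpow, mul_one, smul_eq_mul] at h1
    rw [show (n:ℝ) - s + b + 1 = n + b - s + 1 by ring, ← h1]
    push_cast; rfl
  have e2 : iteratedDeriv (n - s) (fun z : ℂ => (1 + z) ^ ((n:ℂ) + a)) 0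
      = ((Real.Gamma (n + a + 1) / Real.Gamma (s + a + 1) : ℝ) : ℂ) := by
    have h1 := iterDeriv_one_add (n + a) (n - s) (by push_cast [hs']; linarith) 0 (by simp)
    simp only [add_zero, Complex.one_cpow, mul_one] at h1
    rw [show (s:ℝ) + a + 1 = n + a - (n - s : ℕ) + 1 by push_cast [hs']; ring, ← h1]
    push_cast; rfl
  rw [e1, e2]
  have e3 : (n.choose s : ℝ) = n.factorial / (s.factorial * (n - s).factorial) :=
    Nat.cast_choose ℝ hs'
  have e4 : ((2:ℝ)) ^ n * ((0 - 1) / 2) ^ s * ((0 + 1) / 2) ^ (n - s) = (-1) ^ s := by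
    rw [show (2:ℝ) ^ n = 2 ^ s * 2 ^ (n - s) by rw [← pow_add]; congr 1; omega]
    rw [div_pow, div_pow]; field_simp; norm_num
  have : ((n.choose s : ℝ) : ℂ) = n.choose s := by push_cast; rfl
  rw [← this, e3]
  have key : (n.factorial / (s.factorial * (n - s).factorial) : ℝ) *
      ((-1) ^ s * (Real.Gamma (n + b + 1) / Real.Gamma (n - s + b + 1))) *
      (Real.Gamma (n + a + 1) / Real.Gamma (s + a + 1))
    = n.factorial * 2 ^ n * (Real.Gamma (n + a + 1) / (Real.Gamma (s + a + 1) * (n - s).factorial) *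
      (Real.Gamma (n + b + 1) / (Real.Gamma (n - s + b + 1) * s.factorial)) * ((0 - 1) / 2) ^ s *
      ((0 + 1) / 2) ^ (n - s)) := by
    rw [← e4]
    have g1 : 0 < Real.Gamma (n - s + b + 1) := Real.Gamma_pos_of_pos (by linarith)
    have g2 : 0 < Real.Gamma (s + a + 1) := Real.Gamma_pos_of_pos (by linarith)
    have f1 : (0:ℝ) < s.factorial := by positivity
    have f2 : (0:ℝ) < (n - s).factorial := by positivity
    field_simp
  have key2 := congrArg (fun x : ℝ => (x : ℂ)) key
  push_cast at key2 ⊢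
  exact key2

lemma diffCont {A B : ℝ} (hA : 0 < A) (hB : 0 < B) :
    DiffContOnCl ℂ (fun z : ℂ => (1 - z) ^ (B : ℂ) * (1 + z) ^ (A : ℂ)) (Metric.ball 0 1) := by
  constructor
  · intro z hz
    have h1 : 1 + z ∈ Complex.slitPlane :=
      Complex.mem_slitPlane_of_norm_lt_one (by simpa using hz)
    have h2 : 1 - z ∈ Complex.slitPlane := by
      rw [sub_eq_add_neg]
      exact Complex.mem_slitPlane_of_norm_lt_one (by simpa using hz)
    have d1 : DifferentiableAt ℂ (fun z : ℂ => (1 + z) ^ (A : ℂ)) z :=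
      DifferentiableAt.cpow_const (by fun_prop) h1
    have d2 : DifferentiableAt ℂ (fun z : ℂ => (1 - z) ^ (B : ℂ)) z :=
      DifferentiableAt.cpow_const (by fun_prop) h2
    exact (d2.mul d1).differentiableWithinAt
  · rw [closure_ball _ one_ne_zero]
    intro z hz
    have hz' : ‖z‖ ≤ 1 := by simpa using hz
    have hre := (Complex.abs_re_le_norm z).trans hz'
    rw [abs_le] at hre
    have c1 : ContinuousAt (fun z : ℂ => (1 + z) ^ (A : ℂ)) z := by
      have := Complex.continuousAt_cpow_const_of_re_pos (z := 1 + z) (w := A)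
        (Or.inl (by simp; linarith)) (by simpa using hA)
      exact ContinuousAt.comp (f := fun z : ℂ => 1 + z) this (by fun_prop)
    have c2 : ContinuousAt (fun z : ℂ => (1 - z) ^ (B : ℂ)) z := by
      have := Complex.continuousAt_cpow_const_of_re_pos (z := 1 - z) (w := B)
        (Or.inl (by simp; linarith)) (by simpa using hB)
      exact ContinuousAt.comp (f := fun z : ℂ => 1 - z) this (by fun_prop)
    exact (c2.mul c1).continuousWithinAt

lemma int_full {a b : ℝ} (ha : -1 < a) (hb : -1 < b) (n : ℕ) (hA : 0 < n + a) (hB : 0 < n + b) :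
    ∫ φ in (0:ℝ)..(2 * π), Complex.exp (-(n * φ * Complex.I)) *
      ((1 - Complex.exp (φ * Complex.I)) ^ ((n + b : ℝ) : ℂ) *
       (1 + Complex.exp (φ * Complex.I)) ^ ((n + a : ℝ) : ℂ))
     = ((2 * π * 2 ^ n * jacobiP a b n 0 : ℝ) : ℂ) := by
  have h := (diffCont hA hB).circleIntegral_one_div_sub_center_pow_smul one_pos n
  rw [coeff_zero ha hb, circleIntegral] at h
  have h2 : ∀ φ : ℝ, deriv (circleMap 0 1) φ • (1 / (circleMap 0 1 φ - 0) ^ (n + 1)) •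
      ((1 - circleMap 0 1 φ) ^ ((n + b : ℝ) : ℂ) * (1 + circleMap 0 1 φ) ^ ((n + a : ℝ) : ℂ))
      = Complex.I * (Complex.exp (-(n * φ * Complex.I)) *
      ((1 - Complex.exp (φ * Complex.I)) ^ ((n + b : ℝ) : ℂ) *
       (1 + Complex.exp (φ * Complex.I)) ^ ((n + a : ℝ) : ℂ))) := by
    intro φ
    have e : circleMap 0 1 φ = Complex.exp (φ * Complex.I) := by simp [circleMap]
    rw [deriv_circleMap, e, sub_zero, Complex.exp_neg, mul_assoc (n:ℂ), Complex.exp_nat_mul]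
    simp only [smul_eq_mul]
    have := Complex.exp_ne_zero (φ * Complex.I)
    field_simp
    ring
  simp only [h2] at h
  rw [intervalIntegral.integral_const_mul] at h
  have hI := Complex.I_ne_zero
  have hf : (n.factorial : ℂ) ≠ 0 := by exact_mod_cast n.factorial_ne_zero
  apply mul_left_cancel₀ hI
  rw [h, smul_eq_mul]
  push_cast
  field_simp

lemma one_add_exp (φ : ℝ) : 1 + Complex.exp (φ * Complex.I)
    = ((2 * Real.cos (φ / 2) : ℝ) : ℂ) * Complex.exp ((φ / 2 : ℝ) * Complex.I) := by
  have h1 : Complex.exp (φ * Complex.I) = Complex.exp ((φ / 2 : ℝ) * Complex.I) ^ 2 := by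
    rw [← Complex.exp_nat_mul]; congr 1; push_cast; ring
  rw [h1, Complex.exp_mul_I, ← Complex.ofReal_cos, ← Complex.ofReal_sin]
  have h2 : (((Real.cos (φ / 2)) : ℝ) : ℂ) ^ 2 + ((Real.sin (φ / 2) : ℝ) : ℂ) ^ 2 = 1 := by
    exact_mod_cast Real.cos_sq_add_sin_sq (φ / 2)
  push_cast
  push_cast at h2
  linear_combination (-1 : ℂ) * h2 + (Complex.sin (φ / 2)) ^ 2 * Complex.I_sq

lemma one_sub_exp (φ : ℝ) : 1 - Complex.exp (φ * Complex.I)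
    = ((2 * Real.sin (φ / 2) : ℝ) : ℂ) * Complex.exp (((φ - π) / 2 : ℝ) * Complex.I) := by
  have h := one_add_exp (φ - π)
  rw [show Real.cos ((φ - π) / 2) = Real.sin (φ / 2) by
    rw [← Real.cos_sub_pi_div_two]; congr 1; ring] at h
  rw [← h, show ((φ - π : ℝ) : ℂ) * Complex.I = φ * Complex.I - π * Complex.I by push_cast; ring,
    Complex.exp_sub_pi_mul_I]
  ring

lemma polar_cpow {r t A : ℝ} (hr : 0 < r) (h1 : -π < t) (h2 : t ≤ π) :
    ((r : ℂ) * Complex.exp (t * Complex.I)) ^ (A : ℂ)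
      = ((r ^ A : ℝ) : ℂ) * Complex.exp ((A * t : ℝ) * Complex.I) := by
  have hne : (r : ℂ) * Complex.exp (t * Complex.I) ≠ 0 :=
    mul_ne_zero (by exact_mod_cast hr.ne') (Complex.exp_ne_zero _)
  rw [Complex.cpow_def_of_ne_zero hne, Complex.log_mul_eq_add_log_iff
    (by exact_mod_cast hr.ne') (Complex.exp_ne_zero _) |>.2]
  · rw [Complex.log_exp (by simpa using h1) (by simpa using h2), add_mul, Complex.exp_add,
      Complex.ofReal_cpow hr.le, Complex.cpow_def_of_ne_zero (by exact_mod_cast hr.ne')]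
    congr 2
    push_cast; ring
  · rw [Complex.arg_ofReal_of_nonneg hr.le, Complex.arg_exp_mul_I]
    rw [(toIocMod_eq_self _).2 ⟨h1, by linarith⟩]
    exact ⟨by linarith, by linarith⟩

/-- real-parameter integrand -/
noncomputable def gI (a b : ℝ) (n : ℕ) (φ : ℝ) : ℂ :=
  ((Real.sin φ ^ n * (2 * Real.cos (φ / 2)) ^ a * (2 * Real.sin (φ / 2)) ^ b : ℝ) : ℂ) *
    Complex.exp (((a + b) * φ / 2 - (n + b) * π / 2 : ℝ) * Complex.I)

lemma integrand_eq {a b : ℝ} (n : ℕ) {φ : ℝ} (h0 : 0 < φ) (h1 : φ < π) :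
    Complex.exp (-(n * φ * Complex.I)) *
      ((1 - Complex.exp (φ * Complex.I)) ^ ((n + b : ℝ) : ℂ) *
       (1 + Complex.exp (φ * Complex.I)) ^ ((n + a : ℝ) : ℂ)) = 2 ^ n * gI a b n φ := by
  have hs : 0 < Real.sin (φ / 2) := Real.sin_pos_of_pos_of_lt_pi (by linarith) (by linarith)
  have hc : 0 < Real.cos (φ / 2) := Real.cos_pos_of_mem_Ioo ⟨by linarith, by linarith⟩
  rw [one_sub_exp, one_add_exp, polar_cpow (by positivity) (by linarith) (by linarith),
    polar_cpow (by positivity) (by linarith) (by linarith)]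
  unfold gI
  rw [add_comm (n:ℝ) a, add_comm (n:ℝ) b, Real.rpow_add (by positivity), Real.rpow_add (by positivity),
    Real.rpow_natCast, Real.rpow_natCast]
  have e : Real.sin φ = 2 * Real.sin (φ / 2) * Real.cos (φ / 2) := by
    rw [← Real.sin_two_mul]; congr 1; ring
  rw [e]
  have e2 : Complex.exp (((a + b) * φ / 2 - (b + n) * π / 2 : ℝ) * Complex.I)
      = Complex.exp (-(n * φ * Complex.I)) * (Complex.exp (((b + n) * ((φ - π) / 2) : ℝ) * Complex.I) *
        Complex.exp (((a + n) * (φ / 2) : ℝ) * Complex.I)) := by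
    rw [← Complex.exp_add, ← Complex.exp_add]; congr 1; push_cast; ring
  rw [e2]
  push_cast
  rw [mul_pow, mul_pow, mul_pow, mul_pow]
  ring

lemma integrand_conj {A B : ℝ} (n : ℕ) {φ : ℝ} :
    Complex.exp (-(n * ((2 * π - φ : ℝ) : ℂ) * Complex.I)) *
      ((1 - Complex.exp (((2 * π - φ : ℝ) : ℂ) * Complex.I)) ^ (B : ℂ) *
       (1 + Complex.exp (((2 * π - φ : ℝ) : ℂ) * Complex.I)) ^ (A : ℂ)) =
    (starRingEnd ℂ) (Complex.exp (-(n * φ * Complex.I)) *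
      ((1 - Complex.exp (φ * Complex.I)) ^ (B : ℂ) *
       (1 + Complex.exp (φ * Complex.I)) ^ (A : ℂ))) := by
  have e1 : Complex.exp (((2 * π - φ : ℝ) : ℂ) * Complex.I)
      = (starRingEnd ℂ) (Complex.exp (φ * Complex.I)) := by
    rw [← Complex.exp_conj, show ((2 * π - φ : ℝ) : ℂ) * Complex.I
      = 2 * π * Complex.I - φ * Complex.I by push_cast; ring, Complex.exp_sub, Complex.exp_two_pi_mul_I]
    simp [Complex.exp_neg]
  have e2 : ∀ φ : ℝ, Complex.exp (-(n * φ * Complex.I)) = (Complex.exp (φ * Complex.I) ^ n)⁻¹ := by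
    intro φ
    rw [Complex.exp_neg, mul_assoc, Complex.exp_nat_mul]
  have hre : |(Complex.exp (φ * Complex.I)).re| ≤ 1 := by
    rw [Complex.exp_ofReal_mul_I_re]; exact Real.abs_cos_le_one φ
  rw [abs_le] at hre
  have arg1 : ∀ z : ℂ, 0 ≤ z.re → z.arg ≠ π := by
    intro z hz h
    rw [Complex.arg_eq_pi_iff] at h
    linarith [h.1]
  have k1 := Complex.cpow_conj (1 - Complex.exp (φ * Complex.I)) (B:ℂ) (arg1 _ (by simp only [Complex.sub_re, Complex.one_re]; linarith))
  have k2 := Complex.cpow_conj (1 + Complex.exp (φ * Complex.I)) (A:ℂ) (arg1 _ (by simp only [Complex.add_re, Complex.one_re]; linarith))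
  rw [e2, e2, e1]
  simp only [map_mul, map_inv₀, map_pow]
  rw [Complex.conj_ofReal] at k1 k2
  rw [k1, k2]
  simp only [Complex.conj_conj, map_sub, map_add, map_one]

lemma jacobi_zero_integral {a b : ℝ} (ha : -1 < a) (hb : -1 < b) (n : ℕ) (hA : 0 < n + a)
    (hB : 0 < n + b) :
    jacobiP a b n 0 = (1 / π) * (∫ φ in (0:ℝ)..π, gI a b n φ).re := by
  have h := int_full ha hb n hA hB
  set g : ℝ → ℂ := fun φ => Complex.exp (-(n * φ * Complex.I)) *
      ((1 - Complex.exp (φ * Complex.I)) ^ ((n + b : ℝ) : ℂ) *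
       (1 + Complex.exp (φ * Complex.I)) ^ ((n + a : ℝ) : ℂ)) with hg
  have hcont : Continuous g := by
    have h1 := (diffCont hA hB).continuousOn
    rw [closure_ball _ one_ne_zero] at h1
    have h2 : Continuous fun φ : ℝ => Complex.exp (φ * Complex.I) := by fun_prop
    have h3 := h1.comp_continuous h2 (fun φ => by simp [Complex.norm_exp_ofReal_mul_I])
    exact Continuous.mul (by fun_prop) h3
  have hsplit : (∫ φ in (0:ℝ)..(2 * π), g φ) = (∫ φ in (0:ℝ)..π, g φ) + ∫ φ in (0:ℝ)..π, g (2 * π - φ) := by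
    rw [intervalIntegral.integral_comp_sub_left (fun x => g x),
      show 2 * π - π = π by ring, sub_zero,
      intervalIntegral.integral_add_adjacent_intervals] <;> exact hcont.intervalIntegrable _ _
  have hconj : (∫ φ in (0:ℝ)..π, g (2 * π - φ)) = (starRingEnd ℂ) (∫ φ in (0:ℝ)..π, g φ) := by
    rw [intervalIntegral.integral_of_le Real.pi_pos.le, intervalIntegral.integral_of_le Real.pi_pos.le,
      ← integral_conj]
    refine integral_congr_ae (Filter.Eventually.of_forall fun φ => ?_)
    exact integrand_conj n
  have hgI : (∫ φ in (0:ℝ)..π, g φ) = 2 ^ n * ∫ φ in (0:ℝ)..π, gI a b n φ := by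
    rw [← intervalIntegral.integral_const_mul]
    rw [intervalIntegral.integral_of_le Real.pi_pos.le, intervalIntegral.integral_of_le Real.pi_pos.le,
      MeasureTheory.integral_Ioc_eq_integral_Ioo, MeasureTheory.integral_Ioc_eq_integral_Ioo]
    refine setIntegral_congr_fun measurableSet_Ioo fun φ hφ => ?_
    exact integrand_eq n hφ.1 hφ.2
  have h' : (∫ φ in (0:ℝ)..(2 * π), g φ) = ((2 * π * 2 ^ n * jacobiP a b n 0 : ℝ) : ℂ) := h
  rw [hsplit, hconj, hgI, Complex.add_conj] at h'
  have h3 : 2 * (2 ^ n * ∫ φ in (0:ℝ)..π, gI a b n φ).re = 2 * π * 2 ^ n * jacobiP a b n 0 := by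
    exact_mod_cast h'
  have h4 : ((2:ℂ) ^ n * ∫ φ in (0:ℝ)..π, gI a b n φ).re = 2 ^ n * (∫ φ in (0:ℝ)..π, gI a b n φ).re := by
    rw [show (2:ℂ) ^ n = ((2 ^ n : ℝ) : ℂ) by push_cast; rfl, Complex.re_ofReal_mul]
  rw [h4] at h3
  have hp := Real.pi_pos
  have h2 : (0:ℝ) < 2 ^ n := by positivity
  field_simp
  apply mul_left_cancel₀ h2.ne'
  linarith

end JacAux

namespace JacAux

/-- Wallis integrals. -/
noncomputable def W (m : ℕ) : ℝ := ∫ x in (0:ℝ)..π, sin x ^ m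

lemma W_pos (m : ℕ) : 0 < W m := integral_sin_pow_pos m

lemma W_rec (m : ℕ) : W (m + 2) = ((m:ℝ) + 1) / (m + 2) * W m := by
  unfold W
  rw [integral_sin_pow]
  simp

lemma W_mul (m : ℕ) : W m * W (m + 1) = 2 * π / (m + 1) := by
  induction m with
  | zero =>
    simp only [W, pow_zero, zero_add, pow_one, integral_sin, intervalIntegral.integral_const]
    simp
    ring
  | succ k ih =>
    rw [W_rec, mul_left_comm, mul_comm (W (k+1)), ih]
    push_cast
    field_simp
    ring

lemma W_succ_le (m : ℕ) : W (m + 1) ≤ W m := integral_sin_pow_succ_le m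

lemma W_sq_lower (m : ℕ) : 2 * π / (m + 1) ≤ W m ^ 2 := by
  rw [← W_mul, sq]
  exact mul_le_mul_of_nonneg_left (W_succ_le m) (W_pos m).le

lemma W_sq_upper (m : ℕ) : W (m + 1) ^ 2 ≤ 2 * π / (m + 1) := by
  rw [← W_mul, sq]
  exact mul_le_mul_of_nonneg_right (W_succ_le m) (W_pos _).le

lemma W_cos_sq (m : ℕ) : ∫ x in (0:ℝ)..π, sin x ^ m * cos x ^ 2 = W m / (m + 2) := by
  have h : ∀ x : ℝ, sin x ^ m * cos x ^ 2 = sin x ^ m - sin x ^ (m+2) := by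
    intro x
    rw [cos_sq']; ring
  simp_rw [h]
  rw [intervalIntegral.integral_sub (by apply Continuous.intervalIntegrable; fun_prop)
    (by apply Continuous.intervalIntegrable; fun_prop)]
  change W m - W (m+2) = _
  rw [W_rec]
  field_simp
  ring

lemma taylor_local (K : ℝ → ℂ) (x0 : ℝ) (hK : ContDiffAt ℝ 2 K x0) :
    ∃ C : ℝ, 0 ≤ C ∧ ∃ δ : ℝ, 0 < δ ∧ ∀ x, |x - x0| < δ →
      ‖K x - K x0 - (x - x0) • deriv K x0‖ ≤ C * (x - x0) ^ 2 := by
  have hd : ContDiffAt ℝ 1 (deriv K) x0 := by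
    have h1 : ContDiffAt ℝ 1 (fderiv ℝ K) x0 := hK.fderiv_right (by norm_num)
    have h2 : deriv K = fun x => fderiv ℝ K x 1 := by ext x; simp
    rw [h2]
    exact h1.clm_apply contDiffAt_const
  have hev : ∀ᶠ x in nhds x0, DifferentiableAt ℝ K x := by
    have := hK.eventually (by simp)
    filter_upwards [this] with x hx
    exact hx.differentiableAt (by simp)
  have hdd := (hd.differentiableAt (by simp)).isBigO_sub
  obtain ⟨C, hC, hC'⟩ := hdd.exists_nonneg
  have := (hC'.bound).and hev
  obtain ⟨δ, hδ, hb⟩ := Metric.eventually_nhds_iff.1 this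
  refine ⟨C, hC, δ, hδ, fun x hx => ?_⟩
  have hder : ∀ y ∈ Metric.closedBall x0 |x - x0|, HasDerivWithinAt
      (fun y => K y - K x0 - (y - x0) • deriv K x0) (deriv K y - deriv K x0)
      (Metric.closedBall x0 |x - x0|) y := by
    intro y hy
    have hy' : dist y x0 < δ := lt_of_le_of_lt hy hx
    have h1 := (hb hy').2.hasDerivAt
    have h2 := ((h1.sub_const (K x0)).sub ((((hasDerivAt_id y).sub_const x0)).smul_const (deriv K x0)))
    rw [one_smul] at h2
    exact h2.hasDerivWithinAt
  have hbd : ∀ y ∈ Metric.closedBall x0 |x - x0|, ‖deriv K y - deriv K x0‖ ≤ C * |x - x0| := by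
    intro y hy
    have hy' : dist y x0 < δ := lt_of_le_of_lt hy hx
    refine (hb hy').1.trans ?_
    have : ‖y - x0‖ ≤ |x - x0| := hy
    gcongr
  have := Convex.norm_image_sub_le_of_norm_hasDerivWithin_le hder hbd (convex_closedBall _ _)
    (Metric.mem_closedBall_self (abs_nonneg _)) (show x ∈ _ from by simp [Real.dist_eq])
  simp only [sub_self, zero_smul, sub_zero] at this
  refine this.trans (le_of_eq ?_)
  rw [Real.norm_eq_abs, mul_assoc, ← sq, sq_abs]

lemma cos_sq_lower {x : ℝ} (h0 : 0 ≤ x) (h1 : x ≤ π) : (2 / π * (x - π / 2)) ^ 2 ≤ cos x ^ 2 := by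
  have := Real.mul_abs_le_abs_sin (x := x - π/2) (by rw [abs_le]; constructor <;> linarith)
  rw [sin_sub_pi_div_two, abs_neg] at this
  rw [← sq_abs, ← sq_abs (cos x), abs_mul, abs_of_pos (by positivity : 0 < 2 / π)]
  gcongr

lemma taylor_global (K : ℝ → ℂ) (hc : ContinuousOn K (Set.Icc 0 π)) (hK : ContDiffAt ℝ 2 K (π/2)) :
    ∃ C : ℝ, 0 ≤ C ∧ ∀ x ∈ Set.Icc (0:ℝ) π,
      ‖K x - K (π/2) - (x - π/2) • deriv K (π/2)‖ ≤ C * cos x ^ 2 := by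
  obtain ⟨C, hC, δ, hδ, hb⟩ := taylor_local K _ hK
  obtain ⟨B, hB⟩ := isCompact_Icc.exists_bound_of_continuousOn
    (f := fun x => K x - K (π/2) - (x - π/2) • deriv K (π/2)) (s := Set.Icc (0:ℝ) π) (by fun_prop)
  have hB0 : 0 ≤ B := (norm_nonneg _).trans (hB 0 ⟨le_rfl, pi_pos.le⟩)
  refine ⟨(C + B / δ ^ 2) * (π / 2) ^ 2, by positivity, fun x hx => ?_⟩
  have h1 := cos_sq_lower hx.1 hx.2
  have h2 : (x - π/2)^2 ≤ (π/2)^2 * cos x ^ 2 := by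
    calc (x - π/2)^2 = (π/2)^2 * (2 / π * (x - π / 2)) ^ 2 := by field_simp
      _ ≤ _ := by gcongr
  have h3 : ‖K x - K (π/2) - (x - π/2) • deriv K (π/2)‖ ≤ (C + B / δ ^ 2) * (x - π/2)^2 := by
    by_cases hxd : |x - π/2| < δ
    · refine (hb x hxd).trans ?_
      gcongr
      have : 0 ≤ B / δ ^ 2 := by positivity
      linarith
    · push Not at hxd
      refine (hB x hx).trans ?_
      have : δ ^ 2 ≤ (x - π/2)^2 := by rw [← sq_abs (x - π/2)]; gcongr
      calc B = B / δ ^ 2 * δ ^ 2 := by field_simp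
        _ ≤ (C + B / δ ^ 2) * (x - π/2)^2 := by gcongr; linarith
  calc _ ≤ _ := h3
    _ ≤ (C + B / δ ^ 2) * ((π/2)^2 * cos x ^ 2) := by gcongr
    _ = _ := by ring

lemma linear_zero (m : ℕ) : ∫ x in (0:ℝ)..π, sin x ^ m * (x - π/2) = 0 := by
  have := intervalIntegral.integral_comp_sub_left (a := 0) (b := π) (fun x => sin x ^ m * (x - π/2)) π
  simp only [sin_pi_sub, sub_self, sub_zero] at this
  have h2 : ∫ x in (0:ℝ)..π, sin x ^ m * (π - x - π/2) = - ∫ x in (0:ℝ)..π, sin x ^ m * (x - π/2) := by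
    rw [← intervalIntegral.integral_neg]
    congr 1; ext x; ring
  rw [h2] at this
  linarith

lemma laplace (K : ℝ → ℂ) (hc : ContinuousOn K (Set.Icc 0 π)) (hK : ContDiffAt ℝ 2 K (π/2)) :
    ∃ C : ℝ, 0 ≤ C ∧ ∀ m : ℕ,
      ‖(∫ x in (0:ℝ)..π, ((sin x ^ m : ℝ) : ℂ) * K x) - W m * K (π/2)‖ ≤ C * (W m / (m + 2)) := by
  obtain ⟨C, hC, hb⟩ := taylor_global K hc hK
  refine ⟨C, hC, fun m => ?_⟩
  have hu : Set.uIcc (0:ℝ) π = Set.Icc 0 π := Set.uIcc_of_le pi_pos.le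
  have e : (∫ x in (0:ℝ)..π, ((sin x ^ m : ℝ) : ℂ) * K x) - W m * K (π/2) =
      ∫ x in (0:ℝ)..π, ((sin x ^ m : ℝ) : ℂ) * (K x - K (π/2) - (x - π/2) • deriv K (π/2)) := by
    have i1 : IntervalIntegrable (fun x : ℝ => ((sin x ^ m : ℝ) : ℂ) * K x) volume 0 π := by
      apply ContinuousOn.intervalIntegrable
      rw [hu]
      exact (Continuous.continuousOn (by fun_prop)).mul hc
    have e1 : ∀ x : ℝ, ((sin x ^ m : ℝ) : ℂ) * (K x - K (π/2) - (x - π/2) • deriv K (π/2)) =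
      ((sin x ^ m : ℝ) : ℂ) * K x - ((sin x ^ m : ℝ) : ℂ) * K (π/2) -
        ((sin x ^ m * (x - π/2) : ℝ) : ℂ) * deriv K (π/2) := by
      intro x
      rw [Complex.real_smul]; push_cast; ring
    simp_rw [e1]
    rw [intervalIntegral.integral_sub, intervalIntegral.integral_sub i1,
      intervalIntegral.integral_mul_const, intervalIntegral.integral_mul_const,
      intervalIntegral.integral_ofReal, intervalIntegral.integral_ofReal, linear_zero]
    · simp [W]
    · apply Continuous.intervalIntegrable; fun_prop
    · exact i1.sub (by apply Continuous.intervalIntegrable; fun_prop)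
    · apply Continuous.intervalIntegrable; fun_prop
  rw [e, ← W_cos_sq, ← intervalIntegral.integral_const_mul]
  apply intervalIntegral.norm_integral_le_of_norm_le pi_pos.le
  · refine Filter.Eventually.of_forall fun x hx => ?_
    have hs : 0 ≤ sin x := sin_nonneg_of_nonneg_of_le_pi hx.1.le hx.2
    rw [norm_mul, Complex.norm_real, Real.norm_eq_abs, abs_of_nonneg (by positivity)]
    calc _ ≤ sin x ^ m * (C * cos x ^ 2) := by
          gcongr
          exact hb x ⟨hx.1.le, hx.2⟩
      _ = _ := by ring
  · apply Continuous.intervalIntegrable; fun_prop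


/-- The amplitude in the Laplace integral. -/
noncomputable def K1 (a b φ : ℝ) : ℂ :=
  (((2 * cos (φ / 2)) ^ (a + 1) * (2 * sin (φ / 2)) ^ (b + 1) / 2 : ℝ) : ℂ) *
    Complex.exp (((a + b) * φ / 2 - b * π / 2 : ℝ) * Complex.I)

lemma K1_cont {a b : ℝ} (ha : -1 < a) (hb : -1 < b) : Continuous (K1 a b) := by
  unfold K1
  have h1 : Continuous fun φ : ℝ => (2 * cos (φ / 2)) ^ (a + 1) :=
    Continuous.rpow_const (by fun_prop) (fun x => Or.inr (by linarith))
  have h2 : Continuous fun φ : ℝ => (2 * sin (φ / 2)) ^ (b + 1) :=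
    Continuous.rpow_const (by fun_prop) (fun x => Or.inr (by linarith))
  fun_prop

lemma two_cos_pi4 : 2 * cos (π / 2 / 2) = (2:ℝ) ^ (1/2 : ℝ) := by
  rw [show π / 2 / 2 = π / 4 by ring, cos_pi_div_four, ← sqrt_eq_rpow]; ring

lemma two_sin_pi4 : 2 * sin (π / 2 / 2) = (2:ℝ) ^ (1/2 : ℝ) := by
  rw [show π / 2 / 2 = π / 4 by ring, sin_pi_div_four, ← sqrt_eq_rpow]; ring

lemma K1_smooth (a b : ℝ) : ContDiffAt ℝ 2 (K1 a b) (π/2) := by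
  unfold K1
  have h1 : ContDiffAt ℝ 2 (fun φ : ℝ => (2 * cos (φ / 2)) ^ (a + 1)) (π/2) :=
    ContDiffAt.rpow_const_of_ne (by fun_prop) (by rw [two_cos_pi4]; positivity)
  have h2 : ContDiffAt ℝ 2 (fun φ : ℝ => (2 * sin (φ / 2)) ^ (b + 1)) (π/2) :=
    ContDiffAt.rpow_const_of_ne (by fun_prop) (by rw [two_sin_pi4]; positivity)
  have h3 : ContDiffAt ℝ 2 (fun φ : ℝ => (2 * cos (φ / 2)) ^ (a + 1) * (2 * sin (φ / 2)) ^ (b + 1) / 2) (π/2) :=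
    (h1.mul h2).div_const 2
  have h4 := Complex.ofRealCLM.contDiff.contDiffAt.comp (π/2) h3
  refine ContDiffAt.mul h4 ?_
  have h5 : ContDiffAt ℝ 2 (fun φ : ℝ => (a + b) * φ / 2 - b * π / 2) (π/2) := by fun_prop
  have h6 := Complex.ofRealCLM.contDiff.contDiffAt.comp (π/2) h5
  have h7 := h6.mul (contDiffAt_const (c := Complex.I))
  exact h7.cexp

lemma K1_mid (a b : ℝ) : K1 a b (π/2) =
    (((2:ℝ) ^ ((a + b)/2) : ℝ) : ℂ) * Complex.exp (((a - b) * π / 4 : ℝ) * Complex.I) := by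
  unfold K1
  rw [two_cos_pi4, two_sin_pi4, ← rpow_mul (by norm_num), ← rpow_mul (by norm_num),
    ← rpow_add (by norm_num)]
  congr 2
  · rw [show 1 / 2 * (a + 1) + 1 / 2 * (b + 1) = (a + b)/2 + 1 by ring, rpow_add (by norm_num)]
    simp
  · congr 2; ring

lemma gI_eq1 {a b : ℝ} (m : ℕ) {φ : ℝ} (h0 : 0 < φ) (h1 : φ < π) :
    gI a b (m+1) φ = Complex.exp ((-((m:ℝ) + 1) * π / 2 : ℝ) * Complex.I) *
      (((sin φ ^ m : ℝ) : ℂ) * K1 a b φ) := by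
  have hs : 0 < sin (φ / 2) := sin_pos_of_pos_of_lt_pi (by linarith) (by linarith)
  have hc : 0 < cos (φ / 2) := cos_pos_of_mem_Ioo ⟨by linarith, by linarith⟩
  unfold gI K1
  have e1 : sin φ = (2 * cos (φ/2)) * (2 * sin (φ/2)) / 2 := by
    have := sin_two_mul (φ/2)
    rw [show 2 * (φ/2) = φ by ring] at this
    rw [this]; ring
  have e2 : Complex.exp (((a + b) * φ / 2 - ((m+1:ℕ) + b) * π / 2 : ℝ) * Complex.I) =
    Complex.exp ((-((m:ℝ) + 1) * π / 2 : ℝ) * Complex.I) *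
      Complex.exp (((a + b) * φ / 2 - b * π / 2 : ℝ) * Complex.I) := by
    rw [← Complex.exp_add]; congr 1; push_cast; ring
  rw [e2, rpow_add (by positivity), rpow_add (by positivity), rpow_one, rpow_one]
  rw [pow_succ]
  conv_lhs => rw [show ∀ x y : ℝ, sin φ ^ m * sin φ * x * y =
    sin φ ^ m * ((2 * cos (φ/2)) * (2 * sin (φ/2)) / 2) * x * y from fun x y => by rw [← e1]]
  push_cast
  ring

lemma gI_eq2 {a b : ℝ} (m : ℕ) (φ : ℝ) :
    gI (a+1) (b+1) m φ = 2 * Complex.exp ((-((m:ℝ) + 1) * π / 2 : ℝ) * Complex.I) *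
      (((sin φ ^ m : ℝ) : ℂ) * (K1 a b φ * Complex.exp (φ * Complex.I))) := by
  unfold gI K1
  have e2 : Complex.exp (((a + 1 + (b + 1)) * φ / 2 - (m + (b+1)) * π / 2 : ℝ) * Complex.I) =
    Complex.exp ((-((m:ℝ) + 1) * π / 2 : ℝ) * Complex.I) *
      Complex.exp (((a + b) * φ / 2 - b * π / 2 : ℝ) * Complex.I) * Complex.exp (φ * Complex.I) := by
    rw [← Complex.exp_add, ← Complex.exp_add]; congr 1; push_cast; ring
  rw [e2]
  push_cast
  ring

lemma jacobi_zero_asymp {a b : ℝ} (ha : -1 < a) (hb : -1 < b) :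
    ∃ C : ℝ, 0 ≤ C ∧ ∀ m : ℕ,
      |jacobiP a b (m+1) 0 - W m / π * 2 ^ ((a + b)/2) * cos ((a - b) * π / 4 - (m + 1) * π / 2)|
        ≤ C * (W m / (m + 2)) ∧
      |jacobiP (a+1) (b+1) m 0 + 2 * W m / π * 2 ^ ((a + b)/2) * sin ((a - b) * π / 4 - (m + 1) * π / 2)|
        ≤ C * (W m / (m + 2)) := by
  obtain ⟨C1, hC1, h1⟩ := laplace (K1 a b) (K1_cont ha hb).continuousOn (K1_smooth a b)
  obtain ⟨C2, hC2, h2⟩ := laplace (fun φ => K1 a b φ * Complex.exp (φ * Complex.I))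
    (((K1_cont ha hb).mul (by fun_prop)).continuousOn) (by
      refine (K1_smooth a b).mul ?_
      exact (Complex.ofRealCLM.contDiff.contDiffAt.mul (contDiffAt_const (c := Complex.I))).cexp)
  refine ⟨2 * C1 + 2 * C2, by positivity, fun m => ?_⟩
  have hW := W_pos m
  have hWm : 0 ≤ W m / ((m:ℝ) + 2) := by positivity
  have hE : ‖Complex.exp ((-((m:ℝ) + 1) * π / 2 : ℝ) * Complex.I)‖ = 1 :=
    Complex.norm_exp_ofReal_mul_I _
  have hpi : (1:ℝ) / π ≤ 1 := by
    rw [div_le_one pi_pos]; linarith [pi_gt_three]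
  have key : Complex.exp ((-((m:ℝ) + 1) * π / 2 : ℝ) * Complex.I) *
      Complex.exp (((a - b) * π / 4 : ℝ) * Complex.I) =
      Complex.exp (((a - b) * π / 4 - (m + 1) * π / 2 : ℝ) * Complex.I) := by
    rw [← Complex.exp_add]; congr 1; push_cast; ring
  have bound : ∀ (E I J : ℂ) (B : ℝ), ‖E‖ ≤ 2 → ‖I - J‖ ≤ B → 
      |(1/π) * (E * I).re - (1/π) * (E * J).re| ≤ 2 * B := by
    intro E I J B hE hIJ
    rw [← mul_sub, ← Complex.sub_re, ← mul_sub, abs_mul, abs_of_pos (by positivity)]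
    calc 1 / π * |(E * (I - J)).re| ≤ 1 * ‖E * (I - J)‖ := by
          gcongr; exact Complex.abs_re_le_norm _
      _ = ‖E‖ * ‖I - J‖ := by rw [norm_mul, one_mul]
      _ ≤ 2 * B := by gcongr
  constructor
  · rw [jacobi_zero_integral ha hb (m+1) (by push_cast; have := (Nat.cast_nonneg m : (0:ℝ) ≤ m); linarith)
      (by push_cast; have := (Nat.cast_nonneg m : (0:ℝ) ≤ m); linarith)]
    have e1 : ∫ φ in (0:ℝ)..π, gI a b (m+1) φ =
        Complex.exp ((-((m:ℝ) + 1) * π / 2 : ℝ) * Complex.I) *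
          ∫ φ in (0:ℝ)..π, ((sin φ ^ m : ℝ) : ℂ) * K1 a b φ := by
      rw [← intervalIntegral.integral_const_mul]
      rw [intervalIntegral.integral_of_le pi_pos.le, intervalIntegral.integral_of_le pi_pos.le,
        integral_Ioc_eq_integral_Ioo, integral_Ioc_eq_integral_Ioo]
      exact setIntegral_congr_fun measurableSet_Ioo fun φ hφ => gI_eq1 m hφ.1 hφ.2
    rw [e1]
    have e2 : W m / π * 2 ^ ((a + b)/2) * cos ((a - b) * π / 4 - (m + 1) * π / 2) =
        (1 / π) * (Complex.exp ((-((m:ℝ) + 1) * π / 2 : ℝ) * Complex.I) * (W m * K1 a b (π/2))).re := by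
      rw [K1_mid, mul_left_comm, mul_left_comm (Complex.exp _), key, ← mul_assoc,
        ← Complex.ofReal_mul, Complex.re_ofReal_mul, Complex.exp_ofReal_mul_I_re]
      ring
    rw [e2]
    refine (bound _ _ _ _ (by rw [hE]; norm_num) (h1 m)).trans ?_
    nlinarith [mul_nonneg hC2 hWm]
  · rw [jacobi_zero_integral (by linarith) (by linarith) m (by have := (Nat.cast_nonneg m : (0:ℝ) ≤ m); linarith)
      (by have := (Nat.cast_nonneg m : (0:ℝ) ≤ m); linarith)]
    simp_rw [gI_eq2]
    rw [intervalIntegral.integral_const_mul]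
    have e2 : -(2 * W m / π * 2 ^ ((a + b)/2) * sin ((a - b) * π / 4 - (m + 1) * π / 2)) =
        (1 / π) * ((2 * Complex.exp ((-((m:ℝ) + 1) * π / 2 : ℝ) * Complex.I)) *
          (W m * (K1 a b (π/2) * Complex.exp ((π/2 : ℝ) * Complex.I)))).re := by
      have : Complex.exp ((π/2 : ℝ) * Complex.I) = Complex.I := by
        push_cast; exact Complex.exp_pi_div_two_mul_I
      rw [this, K1_mid]
      have e3 : (2 * Complex.exp ((-((m:ℝ) + 1) * π / 2 : ℝ) * Complex.I)) *
          (W m * ((((2:ℝ) ^ ((a + b)/2) : ℝ) : ℂ) * Complex.exp (((a - b) * π / 4 : ℝ) * Complex.I) * Complex.I)) =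
          ((2 * W m * (2:ℝ) ^ ((a + b)/2) : ℝ) : ℂ) *
            (Complex.exp (((a - b) * π / 4 - (m + 1) * π / 2 : ℝ) * Complex.I) * Complex.I) := by
        rw [← key]; push_cast; ring
      rw [e3, Complex.re_ofReal_mul, Complex.mul_I_re, Complex.exp_ofReal_mul_I_im]
      ring
    rw [← sub_neg_eq_add, e2]
    refine (bound _ _ _ _ (by rw [norm_mul, hE]; norm_num) (h2 m)).trans ?_
    nlinarith [mul_nonneg hC1 hWm]

end JacAux

namespace JacAux

lemma wkb (u v g : ℝ → ℝ) (N K θ0 : ℝ) (hN : 0 < N) (hK : 0 ≤ K) (h0 : 0 < θ0) (h1 : θ0 ≤ π/2)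
    (hu : ∀ x ∈ Set.Icc θ0 (π/2), HasDerivAt u (v x) x)
    (hv : ∀ x ∈ Set.Icc θ0 (π/2), HasDerivAt v (-(N^2 + g x) * u x) x)
    (hg : ∀ x ∈ Set.Icc θ0 (π/2), |g x| ≤ K / x^2)
    (hs : K / (N * θ0) ≤ 1/2) (Z0 : ℂ)
    (hZ0 : Z0 = Complex.exp ((-(N * (π/2)) : ℝ) * Complex.I) * (u (π/2) - Complex.I * v (π/2) / N)) :
    |u θ0 - (Z0 * Complex.exp ((N * θ0 : ℝ) * Complex.I)).re| ≤ 2 * ‖Z0‖ * (K / (N * θ0)) := by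
  set Z : ℝ → ℂ := fun x => Complex.exp ((-(N * x) : ℝ) * Complex.I) * (u x - Complex.I * v x / N) with hZ
  have hN' : (N:ℂ) ≠ 0 := by exact_mod_cast hN.ne'
  have hder : ∀ x ∈ Set.Icc θ0 (π/2), HasDerivAt Z
      (Complex.I * (g x / N) * u x * Complex.exp ((-(N * x) : ℝ) * Complex.I)) x := by
    intro x hx
    have e1 : HasDerivAt (fun x : ℝ => Complex.exp ((-(N * x) : ℝ) * Complex.I))
        (Complex.exp ((-(N * x) : ℝ) * Complex.I) * (((-(N * 1) : ℝ) : ℂ) * Complex.I)) x :=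
      ((((hasDerivAt_id x).const_mul N).neg.ofReal_comp).mul_const Complex.I).cexp
    have e2 := (hu x hx).ofReal_comp.sub
      ((((hv x hx).ofReal_comp).const_mul Complex.I).div_const (N:ℂ))
    have e3 := e1.mul e2
    refine e3.congr_deriv ?_
    simp only [Pi.sub_apply]
    push_cast
    field_simp
    ring_nf
    simp only [Complex.I_sq]
    ring
  have hre : ∀ x, u x = (Z x * Complex.exp ((N * x : ℝ) * Complex.I)).re := by
    intro x
    have : Z x * Complex.exp ((N * x : ℝ) * Complex.I) = u x - Complex.I * v x / N := by
      rw [hZ]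
      simp only
      rw [mul_right_comm, ← Complex.exp_add]
      have : ((-(N * x) : ℝ) : ℂ) * Complex.I + ((N * x : ℝ) : ℂ) * Complex.I = 0 := by push_cast; ring
      rw [this, Complex.exp_zero, one_mul]
    rw [this, show (u x : ℂ) - Complex.I * v x / N = (u x : ℂ) - ((v x / N : ℝ) : ℂ) * Complex.I by push_cast; ring]
    simp
  have hun : ∀ x, |u x| ≤ ‖Z x‖ := by
    intro x
    conv_lhs => rw [hre x]
    refine (Complex.abs_re_le_norm _).trans ?_
    rw [norm_mul, Complex.norm_exp_ofReal_mul_I, mul_one]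
  obtain ⟨xs, hxs, hmax⟩ := isCompact_Icc.exists_isMaxOn (Set.nonempty_Icc.2 h1)
    (f := fun x => ‖Z x‖) (fun x hx => (hder x hx).continuousAt.norm.continuousWithinAt)
  set S := ‖Z xs‖ with hS
  have hS0 : 0 ≤ S := norm_nonneg _
  have hbd : ∀ x ∈ Set.Icc θ0 (π/2), ‖Z (π/2) - Z x‖ ≤ S * (K / (N * x)) := by
    intro x hx
    have hx0 : 0 < x := h0.trans_le hx.1
    have hB : ∀ y ∈ Set.Icc x (π/2), HasDerivAt (fun y : ℝ => S * (K / N) * (x⁻¹ - y⁻¹))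
        (S * (K/N) * (y^2)⁻¹) y := by
      intro y hy
      have hy0 : y ≠ 0 := (hx0.trans_le hy.1).ne'
      refine (((hasDerivAt_inv hy0).const_sub x⁻¹).const_mul (S * (K / N))).congr_deriv ?_
      ring
    have := image_norm_le_of_norm_deriv_right_le_deriv_boundary' (f := fun y => Z y - Z x)
      (f' := fun y => Complex.I * (g y / N) * u y * Complex.exp ((-(N * y) : ℝ) * Complex.I))
      (a := x) (b := π/2)
      (fun y hy => ((hder y ⟨hx.1.trans hy.1, hy.2⟩).continuousAt.sub continuousAt_const).continuousWithinAt)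
      (fun y hy => ((hder y ⟨hx.1.trans hy.1, hy.2.le⟩).sub_const _).hasDerivWithinAt)
      (B := fun y => S * (K / N) * (x⁻¹ - y⁻¹)) (B' := fun y => S * (K/N) * (y^2)⁻¹)
      (by simp) (fun y hy => (hB y hy).continuousAt.continuousWithinAt)
      (fun y hy => (hB y ⟨hy.1, hy.2.le⟩).hasDerivWithinAt)
      (by
        intro y hy
        have hy' : y ∈ Set.Icc θ0 (π/2) := ⟨hx.1.trans hy.1, hy.2.le⟩
        rw [norm_mul, norm_mul, norm_mul, Complex.norm_exp_ofReal_mul_I, Complex.norm_I, norm_div,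
          Complex.norm_real, Complex.norm_real, Complex.norm_real, Real.norm_eq_abs, Real.norm_eq_abs,
          Real.norm_eq_abs, abs_of_pos hN, one_mul, mul_one]
        calc |g y| / N * |u y| ≤ (K / y^2) / N * S := by
              gcongr
              · exact hg y hy'
              · exact (hun y).trans (hmax hy')
          _ = _ := by ring)
      (show π/2 ∈ Set.Icc x (π/2) from ⟨hx.2, le_rfl⟩)
    refine this.trans ?_
    have hp : 0 ≤ (π/2)⁻¹ := by positivity
    calc S * (K / N) * (x⁻¹ - (π/2)⁻¹) ≤ S * (K / N) * x⁻¹ := by gcongr; linarith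
      _ = _ := by field_simp
  have hhalf := hbd xs hxs
  have hS2 : S ≤ 2 * ‖Z (π/2)‖ := by
    have h3 : K / (N * xs) ≤ 1/2 := by
      refine le_trans ?_ hs
      have := hxs.1
      gcongr
    have h4 : S ≤ ‖Z (π/2)‖ + ‖Z (π/2) - Z xs‖ := by
      calc S = ‖Z (π/2) - (Z (π/2) - Z xs)‖ := by rw [sub_sub_cancel]
        _ ≤ _ := norm_sub_le _ _
    nlinarith
  have hθ := hbd θ0 ⟨le_rfl, h1⟩
  have hZZ : Z0 = Z (π/2) := hZ0
  rw [hZZ, hre θ0, ← Complex.sub_re, ← sub_mul]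
  refine (Complex.abs_re_le_norm _).trans ?_
  rw [norm_mul, Complex.norm_exp_ofReal_mul_I, mul_one, norm_sub_rev]
  refine hθ.trans ?_
  gcongr


/-- weight -/
noncomputable def wt (a b θ : ℝ) : ℝ := sin (θ/2) ^ (a + 1/2) * cos (θ/2) ^ (b + 1/2)

/-- log-derivative of the weight -/
noncomputable def hh (a b θ : ℝ) : ℝ :=
  ((a + 1/2) * (cos (θ/2) / sin (θ/2)) - (b + 1/2) * (sin (θ/2) / cos (θ/2))) / 2

noncomputable def uu (a b : ℝ) (m : ℕ) (θ : ℝ) : ℝ := wt a b θ * jacobiP a b (m+1) (cos θ)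

noncomputable def rr (a b : ℝ) (m : ℕ) (θ : ℝ) : ℝ :=
  wt a b θ * sin θ * jacobiP (a+1) (b+1) m (cos θ)

noncomputable def vv (a b : ℝ) (m : ℕ) (θ : ℝ) : ℝ :=
  hh a b θ * uu a b m θ - ((m:ℝ) + 1 + a + b + 1) / 2 * rr a b m θ

noncomputable def gg (a b θ : ℝ) : ℝ :=
  (1/4 - a^2) / (4 * sin (θ/2)^2) + (1/4 - b^2) / (4 * cos (θ/2)^2)

lemma half_pos {θ : ℝ} (h0 : 0 < θ) (h1 : θ ≤ π/2) : 0 < sin (θ/2) ∧ 0 < cos (θ/2) :=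
  ⟨sin_pos_of_pos_of_lt_pi (by linarith) (by linarith [pi_pos]),
    cos_pos_of_mem_Ioo ⟨by linarith [pi_pos], by linarith [pi_pos]⟩⟩

lemma hasDeriv_sin_half (θ : ℝ) : HasDerivAt (fun θ : ℝ => sin (θ/2)) (cos (θ/2) / 2) θ := by
  have := ((hasDerivAt_id θ).div_const 2).sin
  refine this.congr_deriv ?_
  simp only [id]; ring

lemma hasDeriv_cos_half (θ : ℝ) : HasDerivAt (fun θ : ℝ => cos (θ/2)) (-(sin (θ/2) / 2)) θ := by
  have := ((hasDerivAt_id θ).div_const 2).cos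
  refine this.congr_deriv ?_
  simp only [id]; ring

lemma wt_deriv (a b : ℝ) {θ : ℝ} (h0 : 0 < θ) (h1 : θ ≤ π/2) :
    HasDerivAt (wt a b) (hh a b θ * wt a b θ) θ := by
  obtain ⟨hs, hc⟩ := half_pos h0 h1
  have e1 := (hasDeriv_sin_half θ).rpow_const (p := a + 1/2) (Or.inl hs.ne')
  have e2 := (hasDeriv_cos_half θ).rpow_const (p := b + 1/2) (Or.inl hc.ne')
  refine (e1.mul e2).congr_deriv ?_
  rw [rpow_sub_one hs.ne', rpow_sub_one hc.ne']
  unfold hh wt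
  field_simp
  ring

lemma hh_deriv (a b : ℝ) {θ : ℝ} (h0 : 0 < θ) (h1 : θ ≤ π/2) :
    HasDerivAt (hh a b) (-((a+1/2) / sin (θ/2)^2 + (b+1/2) / cos (θ/2)^2)/4) θ := by
  obtain ⟨hs, hc⟩ := half_pos h0 h1
  have e1 := ((hasDeriv_cos_half θ).div (hasDeriv_sin_half θ) hs.ne').const_mul (a + 1/2)
  have e2 := ((hasDeriv_sin_half θ).div (hasDeriv_cos_half θ) hc.ne').const_mul (b + 1/2)
  refine ((e1.sub e2).div_const 2).congr_deriv ?_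
  have hsc := sin_sq_add_cos_sq (θ/2)
  have r1 : (-(sin (θ/2)/2) * sin (θ/2) - cos (θ/2) * (cos (θ/2) / 2)) = -(1/2) := by
    linear_combination (-1/2) * hsc
  have r2 : (cos (θ/2)/2 * cos (θ/2) - sin (θ/2) * (-(sin (θ/2) / 2))) = 1/2 := by
    linear_combination (1/2) * hsc
  rw [r1, r2]
  ring

lemma uu_deriv {a b : ℝ} (ha : -1 < a) (hb : -1 < b) (m : ℕ) {θ : ℝ} (h0 : 0 < θ) (h1 : θ ≤ π/2) :
    HasDerivAt (uu a b m) (vv a b m θ) θ := by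
  have e1 := (jacobi_lower ha hb m (cos θ)).comp θ (hasDerivAt_cos θ)
  refine ((wt_deriv a b h0 h1).mul e1).congr_deriv ?_
  unfold vv uu rr
  simp only [Function.comp]
  ring

lemma hh_sin (a b : ℝ) {θ : ℝ} (h0 : 0 < θ) (h1 : θ ≤ π/2) :
    2 * hh a b θ * sin θ = (a+1/2) * (1 + cos θ) - (b+1/2) * (1 - cos θ) := by
  obtain ⟨hs, hc⟩ := half_pos h0 h1
  have e1 : sin θ = 2 * sin (θ/2) * cos (θ/2) := by rw [← sin_two_mul]; congr 1; ring
  have e2 : cos θ = 2 * cos (θ/2)^2 - 1 := by rw [← cos_two_mul]; congr 1; ring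
  have hsc := sin_sq_add_cos_sq (θ/2)
  rw [e1, e2]
  unfold hh
  field_simp
  linear_combination (-(2*b + 1)*2) * hsc

lemma rr_deriv {a b : ℝ} (ha : -1 < a) (hb : -1 < b) (m : ℕ) {θ : ℝ} (h0 : 0 < θ) (h1 : θ ≤ π/2) :
    HasDerivAt (rr a b m) (-hh a b θ * rr a b m θ + 2 * ((m:ℝ) + 1) * uu a b m θ) θ := by
  obtain ⟨d, hd, hd'⟩ := jacobi_raise ha hb m (cos θ)
  have e1 := hd.comp θ (hasDerivAt_cos θ)
  have e2 := ((wt_deriv a b h0 h1).mul (hasDerivAt_sin θ)).mul e1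
  refine e2.congr_deriv ?_
  have e3 := hh_sin a b h0 h1
  unfold rr uu
  simp only [Function.comp, Pi.mul_apply]
  have e4 : sin θ ^ 2 = 1 - cos θ ^ 2 := by rw [sin_sq]
  linear_combination (-wt a b θ) * hd' + wt a b θ * jacobiP (a+1) (b+1) m (cos θ) * e3 - wt a b θ * d * e4

lemma vv_deriv {a b : ℝ} (ha : -1 < a) (hb : -1 < b) (m : ℕ) {θ : ℝ} (h0 : 0 < θ) (h1 : θ ≤ π/2) :
    HasDerivAt (vv a b m) (-(((m:ℝ) + 1 + (a + b + 1)/2)^2 + gg a b θ) * uu a b m θ) θ := by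
  obtain ⟨hs, hc⟩ := half_pos h0 h1
  have e := ((hh_deriv a b h0 h1).mul (uu_deriv ha hb m h0 h1)).sub
    ((rr_deriv ha hb m h0 h1).const_mul (((m:ℝ) + 1 + a + b + 1) / 2))
  refine e.congr_deriv ?_
  have key : -((a+1/2) / sin (θ/2)^2 + (b+1/2) / cos (θ/2)^2)/4 + hh a b θ ^ 2 =
      - gg a b θ - (a+b+1)^2/4 := by
    have hsc := sin_sq_add_cos_sq (θ/2)
    have h1 : (cos (θ/2)/sin (θ/2))^2 = 1 / sin (θ/2)^2 - 1 := by
      field_simp; linear_combination hsc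
    have h2 : (sin (θ/2)/cos (θ/2))^2 = 1 / cos (θ/2)^2 - 1 := by
      field_simp; linear_combination hsc
    have h3 : (cos (θ/2)/sin (θ/2)) * (sin (θ/2)/cos (θ/2)) = 1 := by field_simp
    unfold hh gg
    have e1 : (1/4 - a^2) / (4 * sin (θ/2)^2) = (1/4 - a^2)/4 * (1 / sin (θ/2)^2) := by ring
    have e2 : (1/4 - b^2) / (4 * cos (θ/2)^2) = (1/4 - b^2)/4 * (1 / cos (θ/2)^2) := by ring
    rw [e1, e2]
    linear_combination ((a+1/2)^2/4) * h1 + ((b+1/2)^2/4) * h2 - ((a+1/2)*(b+1/2)/2) * h3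
  unfold vv
  linear_combination (uu a b m θ) * key

lemma gg_bound (a b : ℝ) {θ : ℝ} (h0 : 0 < θ) (h1 : θ ≤ π/2) :
    |gg a b θ| ≤ ((|1/4 - a^2| + |1/4 - b^2|) * (π^2 / 4)) / θ^2 := by
  obtain ⟨hs, hc⟩ := half_pos h0 h1
  have hsin : θ / π ≤ sin (θ/2) := by
    have := mul_le_sin (x := θ/2) (by linarith) (by linarith [pi_pos])
    refine le_trans (le_of_eq ?_) this
    field_simp
  have hcos : θ / π ≤ cos (θ/2) := by
    refine hsin.trans ?_
    rw [← cos_pi_div_two_sub]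
    exact cos_le_cos_of_nonneg_of_le_pi (by linarith) (by linarith [pi_pos]) (by linarith)
  unfold gg
  refine (abs_add_le _ _).trans ?_
  rw [abs_div, abs_div, abs_of_pos (by positivity : 0 < 4 * sin (θ/2)^2),
    abs_of_pos (by positivity : 0 < 4 * cos (θ/2)^2)]
  calc _ ≤ |1/4 - a^2| / (4 * (θ/π)^2) + |1/4 - b^2| / (4 * (θ/π)^2) := by gcongr
    _ = _ := by field_simp

end JacAux

namespace JacAux

lemma wt_mid (a b : ℝ) : wt a b (π/2) = 2 ^ (-((a+b+1)/2)) := by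
  have e : (2:ℝ) ^ (-(1/2:ℝ)) = √2 / 2 := by
    rw [rpow_neg (by norm_num), ← sqrt_eq_rpow]
    have := Real.mul_self_sqrt (show (0:ℝ) ≤ 2 by norm_num)
    field_simp
    nlinarith
  unfold wt
  rw [show π / 2 / 2 = π / 4 by ring, cos_pi_div_four, sin_pi_div_four, ← e,
    ← rpow_mul (by norm_num), ← rpow_mul (by norm_num), ← rpow_add (by norm_num)]
  congr 1; ring

lemma hh_mid (a b : ℝ) : hh a b (π/2) = (a - b)/2 := by
  unfold hh
  rw [show π / 2 / 2 = π / 4 by ring, cos_pi_div_four, sin_pi_div_four, div_self (by positivity)]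
  ring

lemma mid_asymp {a b : ℝ} (ha : -1 < a) (hb : -1 < b) (hab : 0 ≤ a + b + 1) :
    ∃ C : ℝ, 0 ≤ C ∧ ∀ m : ℕ,
      |uu a b m (π/2) - W m / (√2 * π) * cos ((a - b) * π / 4 - (m + 1) * π / 2)|
        ≤ C * (W m / (m + 1)) ∧
      |vv a b m (π/2) / ((m:ℝ) + 1 + (a + b + 1)/2)
          - W m / (√2 * π) * sin ((a - b) * π / 4 - (m + 1) * π / 2)|
        ≤ C * (W m / (m + 1)) := by
  obtain ⟨C0, hC0, h⟩ := jacobi_zero_asymp ha hb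
  set ω := wt a b (π/2) with hω
  have hω0 : 0 < ω := by rw [hω, wt_mid]; positivity
  have hωc : ω * 2 ^ ((a+b)/2) = 1 / √2 := by
    rw [hω, wt_mid, ← rpow_add (by norm_num), sqrt_eq_rpow, one_div, ← rpow_neg (by norm_num)]
    congr 1; ring
  refine ⟨ω * C0 + |a-b|/2 * (1 + ω * C0) + (a+b+1)/2, by positivity, fun m => ?_⟩
  obtain ⟨h1, h2⟩ := h m
  have hW := W_pos m
  have hm : (0:ℝ) ≤ m := Nat.cast_nonneg m
  set ψ := (a - b) * π / 4 - (m + 1) * π / 2 with hψ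
  set n : ℝ := (m:ℝ) + 1 with hn
  have hn1 : 1 ≤ n := by linarith
  have hε : W m / ((m:ℝ) + 2) ≤ W m / n := by
    gcongr; linarith
  set e := W m / n with he
  have he0 : 0 ≤ e := by positivity
  have heW : e ≤ W m := div_le_self hW.le hn1
  have hA : W m / (√2 * π) ≤ W m := by
    apply div_le_self hW.le
    have : 1 ≤ √2 := Real.one_le_sqrt.2 (by norm_num)
    nlinarith [pi_gt_three]
  set A := W m / (√2 * π) with hAd
  have hA0 : 0 ≤ A := by positivity
  have hu : uu a b m (π/2) = ω * jacobiP a b (m+1) 0 := by simp [uu, hω]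
  have hr : rr a b m (π/2) = ω * jacobiP (a+1) (b+1) m 0 := by simp [rr, hω]
  have hAc : ω * (W m / π * 2 ^ ((a+b)/2)) = A := by
    calc _ = (W m / π) * (ω * 2 ^ ((a+b)/2)) := by ring
      _ = _ := by rw [hωc, hAd]; field_simp
  have b1 : |uu a b m (π/2) - A * cos ψ| ≤ ω * C0 * e := by
    rw [hu, ← hAc]
    calc _ = |ω * (jacobiP a b (m+1) 0 - W m / π * 2 ^ ((a+b)/2) * cos ψ)| := by congr 1; ring
      _ = ω * |jacobiP a b (m+1) 0 - W m / π * 2 ^ ((a+b)/2) * cos ψ| := by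
        rw [abs_mul, abs_of_pos hω0]
      _ ≤ ω * (C0 * e) := by
        gcongr
        exact h1.trans (by gcongr)
      _ = _ := by ring
  have b2 : |rr a b m (π/2) + 2 * A * sin ψ| ≤ ω * C0 * e := by
    rw [hr, ← hAc]
    calc _ = |ω * (jacobiP (a+1) (b+1) m 0 + 2 * W m / π * 2 ^ ((a+b)/2) * sin ψ)| := by congr 1; ring
      _ = ω * |jacobiP (a+1) (b+1) m 0 + 2 * W m / π * 2 ^ ((a+b)/2) * sin ψ| := by
        rw [abs_mul, abs_of_pos hω0]
      _ ≤ ω * (C0 * e) := by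
        gcongr
        exact h2.trans (by gcongr)
      _ = _ := by ring
  refine ⟨b1.trans ?_, ?_⟩
  · have : 0 ≤ |a-b|/2 * (1 + ω * C0) * e := by positivity
    have : 0 ≤ (a+b+1)/2 * e := by positivity
    linarith
  set s := (a+b+1)/2 with hs
  have hs0 : 0 ≤ s := by positivity
  have hN : 0 < n + s := by linarith
  have hub : |uu a b m (π/2)| ≤ W m * (1 + ω * C0) := by
    have h3 : |A * cos ψ| ≤ W m := by
      rw [abs_mul, abs_of_nonneg hA0]
      nlinarith [abs_cos_le_one ψ]
    have h4 : |uu a b m (π/2)| ≤ |uu a b m (π/2) - A * cos ψ| + |A * cos ψ| := by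
      calc _ = |(uu a b m (π/2) - A * cos ψ) + A * cos ψ| := by rw [sub_add_cancel]
        _ ≤ _ := abs_add_le _ _
    have : ω * C0 * e ≤ ω * C0 * W m := by gcongr
    linarith
  have hv : vv a b m (π/2) - (n + s) * (A * sin ψ) =
      (a-b)/2 * uu a b m (π/2) - (n + 2 * s)/2 * (rr a b m (π/2) + 2 * A * sin ψ) + s * A * sin ψ := by
    unfold vv; rw [hh_mid]; ring
  have hWe : W m = n * e := by rw [he]; field_simp
  have hsin : |s * A * sin ψ| ≤ s * W m := by
    rw [abs_mul, abs_mul, abs_of_nonneg hA0, abs_of_nonneg hs0]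
    calc s * A * |sin ψ| ≤ s * W m * 1 := by gcongr; exact abs_sin_le_one ψ
      _ = _ := by ring
  have hv2 : |vv a b m (π/2) - (n + s) * (A * sin ψ)| ≤
      |a-b|/2 * (W m * (1 + ω * C0)) + (n + s) * (ω * C0 * e) + s * W m := by
    rw [hv]
    refine (abs_add_le _ _).trans (add_le_add ((abs_sub _ _).trans (add_le_add ?_ ?_)) hsin)
    · rw [abs_mul, abs_div, abs_two]; gcongr
    · rw [abs_mul, abs_of_nonneg (by positivity)]
      gcongr
      linarith
  have hdiv : vv a b m (π/2) / (n + s) - A * sin ψ = (vv a b m (π/2) - (n + s) * (A * sin ψ)) / (n + s) := by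
    field_simp
  rw [hdiv, abs_div, abs_of_pos hN, div_le_iff₀ hN]
  refine hv2.trans ?_
  have q1 : |a-b|/2 * (W m * (1 + ω * C0)) ≤ |a-b|/2 * (1 + ω * C0) * e * (n + s) := by
    rw [hWe]
    have : 0 ≤ |a-b|/2 * (1 + ω * C0) * e * s := by positivity
    linarith
  have q2 : s * W m ≤ s * e * (n+s) := by
    rw [hWe]
    have : 0 ≤ s * e * s := by positivity
    linarith
  linarith

lemma jac_asymp {a b : ℝ} (ha : -1 < a) (hb : -1 < b) (hab : 0 ≤ a + b + 1) :
    ∃ K : ℝ, 0 ≤ K ∧ ∃ C : ℝ, 0 ≤ C ∧ ∀ (m : ℕ) (θ : ℝ), 0 < θ → θ ≤ π/2 → K / (((m:ℝ) + 1) * θ) ≤ 1/2 →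
      |uu a b m θ - W m / (√2 * π) * cos (omegaA a (((m:ℝ) + 1 + (a + b + 1)/2) * θ))|
        ≤ C * (W m / (((m:ℝ) + 1) * θ)) := by
  obtain ⟨C1, hC1, h⟩ := mid_asymp ha hb hab
  set K := (|1/4 - a^2| + |1/4 - b^2|) * (π^2 / 4) with hK
  have hK0 : 0 ≤ K := by positivity
  refine ⟨K, hK0, 2 * (1 + 2 * C1) * K + 2 * C1 * (π / 2), by positivity, fun m θ h0 h1 hKθ => ?_⟩
  obtain ⟨b1, b2⟩ := h m
  have hW := W_pos m
  have hm : (0:ℝ) ≤ m := Nat.cast_nonneg m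
  set ψ := (a - b) * π / 4 - (m + 1) * π / 2 with hψ
  set n : ℝ := (m:ℝ) + 1 with hn
  have hn1 : 1 ≤ n := by linarith
  set N := n + (a+b+1)/2 with hN
  have hNn : n ≤ N := by linarith
  have hN0 : 0 < N := by linarith
  have hA : W m / (√2 * π) ≤ W m := by
    apply div_le_self hW.le
    have : 1 ≤ √2 := Real.one_le_sqrt.2 (by norm_num)
    nlinarith [pi_gt_three]
  set A := W m / (√2 * π) with hAd
  have hA0 : 0 ≤ A := by positivity
  set Z0 : ℂ := Complex.exp ((-(N * (π/2)) : ℝ) * Complex.I) *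
    (uu a b m (π/2) - Complex.I * vv a b m (π/2) / N) with hZ0
  have hKN : K / (N * θ) ≤ K / (n * θ) := by gcongr
  have key := wkb (uu a b m) (vv a b m) (gg a b) N K θ hN0 hK0 h0 h1
    (fun x hx => uu_deriv ha hb m (h0.trans_le hx.1) hx.2)
    (fun x hx => vv_deriv ha hb m (h0.trans_le hx.1) hx.2)
    (fun x hx => gg_bound a b (h0.trans_le hx.1) hx.2) (hKN.trans hKθ) Z0 hZ0
  set e := W m / n with he
  have he0 : 0 ≤ e := by positivity
  have heW : e ≤ W m := div_le_self hW.le hn1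
  set Y : ℂ := (A:ℂ) * Complex.exp ((-(a * π / 2 + π / 4) : ℝ) * Complex.I) with hY
  have hZY : ‖Z0 - Y‖ ≤ 2 * C1 * e := by
    have e1 : Y = Complex.exp ((-(N * (π/2)) : ℝ) * Complex.I) * (A * Complex.exp ((-ψ : ℝ) * Complex.I)) := by
      rw [mul_left_comm, ← Complex.exp_add, hY]
      congr 2
      rw [hN, hψ, hn]; push_cast; ring
    have e2 : ((uu a b m (π/2) : ℝ) : ℂ) - Complex.I * vv a b m (π/2) / N - A * Complex.exp ((-ψ : ℝ) * Complex.I)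
        = ((uu a b m (π/2) - A * cos ψ : ℝ) : ℂ) - ((vv a b m (π/2) / N - A * sin ψ : ℝ) : ℂ) * Complex.I := by
      rw [Complex.exp_mul_I, ← Complex.ofReal_cos, ← Complex.ofReal_sin, cos_neg, sin_neg]
      push_cast; ring
    rw [e1, hZ0, ← mul_sub, norm_mul, Complex.norm_exp_ofReal_mul_I, one_mul, e2]
    refine (norm_sub_le _ _).trans ?_
    rw [norm_mul, Complex.norm_I, mul_one, Complex.norm_real, Complex.norm_real, Real.norm_eq_abs, Real.norm_eq_abs]
    linarith
  have hYn : ‖Y‖ = A := by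
    rw [hY, norm_mul, Complex.norm_exp_ofReal_mul_I, mul_one, Complex.norm_real, Real.norm_eq_abs, abs_of_nonneg hA0]
  have hZn : ‖Z0‖ ≤ (1 + 2 * C1) * W m := by
    have : ‖Z0‖ ≤ ‖Z0 - Y‖ + ‖Y‖ := by
      calc _ = ‖(Z0 - Y) + Y‖ := by rw [sub_add_cancel]
        _ ≤ _ := norm_add_le _ _
    have : C1 * e ≤ C1 * W m := by gcongr
    linarith
  have hYre : (Y * Complex.exp ((N * θ : ℝ) * Complex.I)).re = A * cos (omegaA a (N * θ)) := by
    rw [hY, mul_assoc, ← Complex.exp_add, Complex.re_ofReal_mul, ← add_mul, ← Complex.ofReal_add,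
      Complex.exp_ofReal_mul_I_re]
    unfold omegaA
    congr 2; ring
  have hd : |(Z0 * Complex.exp ((N * θ : ℝ) * Complex.I)).re - A * cos (omegaA a (N * θ))| ≤ 2 * C1 * e := by
    rw [← hYre, ← Complex.sub_re, ← sub_mul]
    refine (Complex.abs_re_le_norm _).trans ?_
    rwa [norm_mul, Complex.norm_exp_ofReal_mul_I, mul_one]
  refine (abs_sub_le _ ((Z0 * Complex.exp ((N * θ : ℝ) * Complex.I)).re) _).trans ?_
  have f1 : 2 * ‖Z0‖ * (K / (N * θ)) ≤ 2 * ((1 + 2 * C1) * W m) * (K / (n * θ)) := by gcongr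
  have f2 : 2 * C1 * e ≤ 2 * C1 * ((π/2) * (W m / (n * θ))) := by
    gcongr
    rw [he]
    calc W m / n = θ * (W m / (n * θ)) := by field_simp
      _ ≤ _ := by gcongr
  calc _ ≤ 2 * ((1 + 2 * C1) * W m) * (K / (n * θ)) + 2 * C1 * ((π/2) * (W m / (n * θ))) := by linarith
    _ = _ := by ring

end JacAux

namespace JacAux
open Filter Asymptotics Topology

/-- `f = 1 + O(1/n)`. -/
def RR (f : ℕ → ℝ) : Prop := (fun n => f n - 1) =O[atTop] (fun n : ℕ => (1:ℝ) / n)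

lemma inv_tendsto : Tendsto (fun n : ℕ => (1:ℝ) / n) atTop (𝓝 0) := tendsto_one_div_atTop_nhds_zero_nat

lemma RR.tendsto {f : ℕ → ℝ} (hf : RR f) : Tendsto f atTop (𝓝 1) := by
  have := IsBigO.trans_tendsto hf inv_tendsto
  simpa using this.add_const 1

lemma RR.congr {f g : ℕ → ℝ} (hf : RR f) (h : ∀ᶠ n in atTop, f n = g n) : RR g :=
  IsBigO.congr' hf (by filter_upwards [h] with n hn; rw [hn]) EventuallyEq.rfl

lemma RR.mul {f g : ℕ → ℝ} (hf : RR f) (hg : RR g) : RR (fun n => f n * g n) := by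
  have h1 : (fun n => (f n - 1) * g n) =O[atTop] (fun n : ℕ => (1:ℝ) / n) := by
    have := IsBigO.mul hf (hg.tendsto.isBigO_one ℝ)
    simpa using this
  have := h1.add hg
  unfold RR
  refine this.congr_left fun n => ?_
  ring

lemma RR.rpow {f : ℕ → ℝ} (hf : RR f) (p : ℝ) : RR (fun n => f n ^ p) := by
  have hd : DifferentiableAt ℝ (fun x : ℝ => x ^ p) 1 :=
    (Real.hasDerivAt_rpow_const (Or.inl one_ne_zero)).differentiableAt
  have h1 := hd.isBigO_sub.comp_tendsto hf.tendsto
  have h2 := h1.trans hf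
  unfold RR
  simpa [Function.comp_def] using h2

lemma RR.sandwich {f g h : ℕ → ℝ} (hf : RR f) (hh : RR h) (h1 : ∀ᶠ n in atTop, f n ≤ g n)
    (h2 : ∀ᶠ n in atTop, g n ≤ h n) : RR g := by
  have h3 := (IsBigO.norm_left hf).add (IsBigO.norm_left hh)
  refine IsBigO.trans (IsBigO.of_bound 1 ?_) h3
  filter_upwards [h1, h2] with n a b
  rw [one_mul]
  simp only [Real.norm_eq_abs]
  refine le_trans ?_ (le_abs_self _)
  rw [abs_le]
  constructor
  · linarith [neg_abs_le (f n - 1), abs_nonneg (h n - 1)]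
  · linarith [le_abs_self (h n - 1), abs_nonneg (f n - 1)]

lemma RR_one : RR (fun _ => 1) := by
  unfold RR; simp only [sub_self]; exact isBigO_zero _ _

lemma RR_shift (c : ℝ) : RR (fun n : ℕ => ((n:ℝ) + c) / n) := by
  unfold RR
  refine IsBigO.of_bound |c| ?_
  filter_upwards [eventually_gt_atTop 0] with n hn
  have : (0:ℝ) < n := by exact_mod_cast hn
  have e : ((n:ℝ) + c) / n - 1 = c * (1 / n) := by field_simp; ring
  rw [e, norm_mul, Real.norm_eq_abs]

lemma ev_pos (c : ℝ) : ∀ᶠ n : ℕ in atTop, 0 < (n:ℝ) + c := by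
  have := (tendsto_natCast_atTop_atTop (R := ℝ)).eventually_gt_atTop (-c)
  filter_upwards [this] with n hn
  linarith

lemma wendel_upper {x t : ℝ} (hx : 0 < x) (h0 : 0 < t) (h1 : t < 1) :
    Gamma (x + t) ≤ Gamma x * x ^ t := by
  have := Real.Gamma_mul_add_mul_le_rpow_Gamma_mul_rpow_Gamma (s := x) (t := x + 1) (a := 1 - t) (b := t)
    hx (by linarith) (by linarith) h0 (by ring)
  have hG := Gamma_pos_of_pos hx
  rw [Gamma_succ' hx, mul_rpow hx.le hG.le] at this
  rw [show (1 - t) * x + t * (x + 1) = x + t by ring] at this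
  refine this.trans (le_of_eq ?_)
  calc _ = (Gamma x ^ (1 - t) * Gamma x ^ t) * x ^ t := by ring
    _ = _ := by rw [← rpow_add hG]; simp

lemma wendel {x t : ℝ} (hx : 0 < x) (h0 : 0 < t) (h1 : t < 1) :
    (x / (x + t)) ^ (1 - t) * x ^ t ≤ Gamma (x + t) / Gamma x ∧ Gamma (x + t) / Gamma x ≤ x ^ t := by
  have hG := Gamma_pos_of_pos hx
  constructor
  · rw [le_div_iff₀ hG]
    have := wendel_upper (x := x + t) (t := 1 - t) (by linarith) (by linarith) (by linarith)
    rw [show x + t + (1 - t) = x + 1 by ring, Gamma_succ' hx] at this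
    rw [div_rpow hx.le (by linarith)]
    have hp : 0 < (x + t) ^ (1 - t) := by positivity
    have e : x ^ (1-t) * x ^ t = x := by rw [← rpow_add hx]; simp
    calc x ^ (1 - t) / (x + t) ^ (1 - t) * x ^ t * Gamma x = (x ^ (1-t) * x ^ t) * Gamma x / (x + t) ^ (1 - t) := by ring
      _ = x * Gamma x / (x + t) ^ (1 - t) := by rw [e]
      _ ≤ _ := by rw [div_le_iff₀ hp]; exact this
  · rw [div_le_iff₀ hG, mul_comm]
    exact wendel_upper hx h0 h1

lemma gamma_base (c t : ℝ) (h0 : 0 ≤ t) (h1 : t < 1) :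
    RR (fun n : ℕ => Gamma (n + c + t) / Gamma (n + c) / (n:ℝ) ^ t) := by
  rcases h0.eq_or_lt with rfl | h0
  · refine RR_one.congr ?_
    filter_upwards [ev_pos c] with n hn
    have := Gamma_pos_of_pos hn
    simp [this.ne']
  have hup : RR (fun n : ℕ => (((n:ℝ) + c) / n) ^ t) := (RR_shift c).rpow t
  have hlo := ((((RR_shift c).mul ((RR_shift (c + t)).rpow (-1)))).rpow (1 - t)).mul hup
  refine RR.sandwich hlo hup ?_ ?_
  · filter_upwards [ev_pos c, eventually_gt_atTop 0, ev_pos (c + t)] with n hn hn0 hn1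
    have hn0 : (0:ℝ) < n := by exact_mod_cast hn0
    have := (wendel hn h0 h1).1
    rw [le_div_iff₀ (by positivity)]
    refine le_trans (le_of_eq ?_) this
    rw [div_rpow hn.le hn0.le, mul_assoc, div_mul_cancel₀ _ (by positivity)]
    congr 2
    rw [rpow_neg_one, add_assoc]
    field_simp
  · filter_upwards [ev_pos c, eventually_gt_atTop 0] with n hn hn0
    have hn0 : (0:ℝ) < n := by exact_mod_cast hn0
    have := (wendel hn h0 h1).2
    rw [div_rpow hn.le hn0.le]
    gcongr

lemma gamma_ratio_nat (c t : ℝ) (h0 : 0 ≤ t) (h1 : t < 1) (k : ℕ) :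
    RR (fun n : ℕ => Gamma (n + c + (t + k)) / Gamma (n + c) / (n:ℝ) ^ (t + k)) := by
  induction k with
  | zero => simpa using gamma_base c t h0 h1
  | succ k ih =>
    refine (ih.mul (RR_shift (c + (t + k)))).congr ?_
    filter_upwards [ev_pos (c + (t + k)), eventually_gt_atTop 0, ev_pos c] with n hn hn0 hn1
    have hn0 : (0:ℝ) < n := by exact_mod_cast hn0
    have hn' : 0 < (n:ℝ) + c + (t + k) := by linarith
    push_cast
    rw [show (n:ℝ) + c + (t + (k + 1)) = n + c + (t + k) + 1 by ring, Gamma_succ' hn',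
      show t + ((k:ℝ) + 1) = t + k + 1 by ring, rpow_add_one hn0.ne']
    have := Gamma_pos_of_pos hn1
    field_simp
    ring

lemma gamma_ratio (c s : ℝ) (hs : 0 ≤ s) :
    RR (fun n : ℕ => Gamma (n + c + s) / Gamma (n + c) / (n:ℝ) ^ s) := by
  have := gamma_ratio_nat c (Int.fract s) (Int.fract_nonneg s) (Int.fract_lt_one s) ⌊s⌋₊
  have e : Int.fract s + (⌊s⌋₊ : ℝ) = s := by
    rw [natCast_floor_eq_intCast_floor hs]
    exact Int.fract_add_floor s
  rwa [e] at this

lemma W_RR : RR (fun n : ℕ => W (n - 1) / √(2 * π) * (n:ℝ) ^ (1/2:ℝ)) := by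
  have hsq : RR (fun n : ℕ => W (n - 1) ^ 2 / (2 * π) * n) := by
    refine RR.sandwich RR_one ((RR_shift (-1)).rpow (-1)) ?_ ?_
    · filter_upwards [eventually_gt_atTop 0] with n hn
      obtain ⟨k, rfl⟩ : ∃ k, n = k + 1 := ⟨n - 1, by omega⟩
      have := W_sq_lower k
      simp only [Nat.add_sub_cancel]
      rw [div_le_iff₀ (by positivity)] at this
      rw [div_mul_eq_mul_div, le_div_iff₀ (by positivity)]
      push_cast
      linarith
    · filter_upwards [eventually_gt_atTop 1] with n hn
      obtain ⟨k, rfl⟩ : ∃ k, n = k + 2 := ⟨n - 2, by omega⟩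
      have := W_sq_upper k
      simp only [show k + 2 - 1 = k + 1 from rfl]
      rw [rpow_neg_one, inv_div, div_mul_eq_mul_div, div_le_div_iff₀ (by positivity) (by push_cast; linarith [(Nat.cast_nonneg k : (0:ℝ) ≤ k)])]
      rw [le_div_iff₀ (by positivity)] at this
      push_cast
      nlinarith [(Nat.cast_nonneg k : (0:ℝ) ≤ k)]
  refine (hsq.rpow (1/2)).congr ?_
  filter_upwards with n
  have := W_pos (n-1)
  rw [mul_rpow (by positivity) (by positivity), ← sqrt_eq_rpow (W (n-1) ^ 2 / (2*π)), sqrt_div (by positivity),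
    sqrt_sq this.le]

/-- The combined normalising factor. -/
noncomputable def rho (α β : ℝ) (n : ℕ) : ℝ :=
  √π * (Gamma (n + α + β + 2) / Gamma (n + β + 1)) * (W (n - 1) / (√2 * π)) /
    ((n:ℝ) + (α + β + 2)/2) ^ (α + 1/2)

lemma rho_RR {α : ℝ} (β : ℝ) (hα : -(1/2) < α) : RR (rho α β) := by
  have h1 := ((gamma_ratio (β + 1) (α + 1) (by linarith)).mul W_RR).mul
    ((RR_shift ((α + β + 2)/2)).rpow (-(α + 1/2)))
  refine h1.congr ?_
  filter_upwards [ev_pos ((α + β + 2)/2), eventually_gt_atTop 0] with n hn hn0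
  have hn0 : (0:ℝ) < n := by exact_mod_cast hn0
  unfold rho
  rw [show (n:ℝ) + (β + 1) + (α + 1) = n + α + β + 2 by ring, ← add_assoc (n:ℝ) β 1,
    rpow_neg (by positivity), div_rpow hn.le hn0.le, sqrt_mul (by norm_num),
    show α + 1 = (α + 1/2) + 1/2 by ring, rpow_add hn0]
  have hpi : π = √π * √π := (Real.mul_self_sqrt pi_pos.le).symm
  have h2 : √π / (√2 * π) = 1 / (√2 * √π) := by
    rw [div_eq_div_iff (by positivity) (by positivity)]
    linear_combination (-√2) * hpi
  have h3 : √π * (Gamma (n + α + β + 2) / Gamma (n + β + 1)) * (W (n - 1) / (√2 * π)) =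
    (Gamma (n + α + β + 2) / Gamma (n + β + 1)) * W (n-1) * (√π / (√2 * π)) := by ring
  rw [h3, h2]
  have p1 : (0:ℝ) < (n:ℝ) ^ (α + 1/2) := by positivity
  have p2 : (0:ℝ) < ((n:ℝ) + (α + β + 2) / 2) ^ (α + 1/2) := by positivity
  field_simp

end JacAux

namespace JacAux

lemma mAB_wt (a b : ℝ) {θ : ℝ} (h0 : 0 < θ) (h1 : θ ≤ π/2) :
    mAB a b θ * √π * wt a b θ = 1 := by
  obtain ⟨hs, hc⟩ := half_pos h0 h1
  unfold mAB wt
  rw [show -a - 1/2 = -(a + 1/2) by ring, show -b - 1/2 = -(b + 1/2) by ring, rpow_neg hs.le,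
    rpow_neg hc.le, rpow_neg pi_pos.le, ← sqrt_eq_rpow]
  have p1 : 0 < sin (θ/2) ^ (a + 1/2) := by positivity
  have p2 : 0 < cos (θ/2) ^ (b + 1/2) := by positivity
  have p3 : 0 < √π := by positivity
  field_simp

lemma mAB_pos (a b : ℝ) {θ : ℝ} (h0 : 0 < θ) (h1 : θ ≤ π/2) : 0 < mAB a b θ := by
  obtain ⟨hs, hc⟩ := half_pos h0 h1
  unfold mAB
  positivity

end JacAux

/-- Lemma 2.4 ii): one-term asymptotics of the generalised Dirichlet kernel
`v_L^{(α,β)}(1,cos θ)` for `π/2 < θ ≤ π − c⁽¹⁾/L`, with `L̃ = L + (α+β+2)/2`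
and `θ' = π − θ`. -/
theorem dirichletJ_one_term_asymptotics_right (α β : ℝ)
    (hα : -(1 / 2 : ℝ) < α) (hβ : -(1 / 2 : ℝ) < β) :
    ∃ c : ℝ, 0 < c ∧ ∃ C : ℝ, 0 < C ∧
      ∀ L : ℕ, 1 ≤ L → ∀ θ : ℝ, Real.pi / 2 < θ → θ ≤ Real.pi - c / (L : ℝ) →
        |dirichletJ α β L 1 (Real.cos θ) -
            (2 : ℝ) ^ (-(α + β + 1)) / Real.Gamma (α + 1) *
              ((L : ℝ) + (α + β + 2) / 2) ^ (α + 1 / 2) * (-1 : ℝ) ^ L *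
                mAB β (α + 1) (Real.pi - θ) *
                  Real.cos (omegaA β (((L : ℝ) + (α + β + 2) / 2) * (Real.pi - θ)))| ≤
          C * ((2 : ℝ) ^ (-(α + β + 1)) / Real.Gamma (α + 1)) *
            ((L : ℝ) + (α + β + 2) / 2) ^ (α + 1 / 2) * mAB β (α + 1) (Real.pi - θ) *
              (Real.sin (Real.pi - θ))⁻¹ * (L : ℝ)⁻¹ := by
  obtain ⟨K, hK, C1, hC1, hasy⟩ := JacAux.jac_asymp (a := β) (b := α + 1) (by linarith) (by linarith)
    (by linarith)
  obtain ⟨B, hB, hρ⟩ := (show Asymptotics.IsBigO Filter.atTop (fun n => JacAux.rho α β n - 1)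
    (fun n : ℕ => (1:ℝ) / n) from JacAux.rho_RR β hα).exists_nonneg
  obtain ⟨n0, hn0⟩ := Filter.eventually_atTop.1 hρ.bound
  refine ⟨2 * n0 + 2 * K + 1, by positivity, B + (1 + B) * (√2 * π) * C1 + 1, by positivity, ?_⟩
  intro L hL θ hθ1 hθ2
  have hL0 : (0:ℝ) < L := by exact_mod_cast hL
  have hL1 : (1:ℝ) ≤ L := by exact_mod_cast hL
  set t := Real.pi - θ with ht
  have hcos : Real.cos θ = -Real.cos t := by rw [ht, Real.cos_pi_sub, neg_neg]
  have hct : (2 * n0 + 2 * K + 1) / (L:ℝ) ≤ t := by linarith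
  have ht0 : 0 < t := lt_of_lt_of_le (by positivity) hct
  have ht1 : t ≤ Real.pi / 2 := by linarith
  have hLt : 2 * n0 + 2 * K + 1 ≤ L * t := by rwa [div_le_iff₀' hL0] at hct
  have hLn : n0 ≤ L := by
    have : (n0:ℝ) ≤ L := by nlinarith [Real.pi_lt_four, (Nat.cast_nonneg n0 : (0:ℝ) ≤ n0)]
    exact_mod_cast this
  have hst : 0 < Real.sin t := Real.sin_pos_of_pos_of_lt_pi ht0 (by linarith [Real.pi_pos])
  obtain ⟨m, rfl⟩ : ∃ m, L = m + 1 := ⟨L - 1, by omega⟩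
  have hW := JacAux.W_pos m
  have hLc : ((m + 1 : ℕ) : ℝ) = (m:ℝ) + 1 := by push_cast; ring
  have hE := hasy m t ht0 ht1 (by
    rw [← hLc, div_le_iff₀ (by positivity)]
    nlinarith [(Nat.cast_nonneg n0 : (0:ℝ) ≤ n0)])
  rw [← hLc, show β + (α + 1) + 1 = α + β + 2 by ring] at hE
  have hr := hn0 (m+1) hLn
  rw [Real.norm_eq_abs, Real.norm_eq_abs, abs_of_pos (by positivity : (0:ℝ) < 1 / ((m+1:ℕ):ℝ))] at hr
  have hmw := JacAux.mAB_wt β (α + 1) ht0 ht1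
  have hmp := JacAux.mAB_pos β (α + 1) ht0 ht1
  rw [JacAux.dirichlet_closed hα hβ, hcos, JacAux.jacobiP_refl]
  have hu : JacAux.uu β (α+1) m t = JacAux.wt β (α+1) t * jacobiP β (α+1) (m+1) (Real.cos t) := rfl
  have hrho : JacAux.rho α β (m+1) * (((m+1:ℕ):ℝ) + (α + β + 2)/2) ^ (α + 1/2) =
      √π * (Real.Gamma (((m+1:ℕ):ℝ) + α + β + 2) / Real.Gamma (((m+1:ℕ):ℝ) + β + 1)) *
        (JacAux.W m / (√2 * π)) := by
    have : 0 < (((m+1:ℕ):ℝ) + (α + β + 2)/2) ^ (α + 1/2) := Real.rpow_pos_of_pos (by linarith) _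
    unfold JacAux.rho
    rw [div_mul_cancel₀ _ this.ne']
    rfl
  have hκ : 0 < (2 : ℝ) ^ (-(α + β + 1)) / Real.Gamma (α + 1) :=
    div_pos (by positivity) (Real.Gamma_pos_of_pos (by linarith))
  have hp : 0 < (((m+1:ℕ):ℝ) + (α + β + 2)/2) ^ (α + 1/2) := Real.rpow_pos_of_pos (by linarith) _
  set κ := (2 : ℝ) ^ (-(α + β + 1)) / Real.Gamma (α + 1) with hκd
  set D := Real.Gamma (((m+1:ℕ):ℝ) + α + β + 2) / Real.Gamma (((m+1:ℕ):ℝ) + β + 1) with hD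
  set n : ℝ := ((m+1:ℕ):ℝ) with hn
  set P := (n + (α + β + 2)/2) ^ (α + 1/2) with hP
  set ρ := JacAux.rho α β (m+1) with hρd
  set co := Real.cos (omegaA β ((n + (α + β + 2)/2) * t)) with hco
  set u := JacAux.uu β (α+1) m t with hud
  set J := jacobiP β (α+1) (m+1) (Real.cos t) with hJ
  set mm := mAB β (α + 1) t with hmm
  have hJu : J = mm * √π * u := by
    rw [hu, ← mul_assoc, hmw, one_mul]
  have hq : 0 < √2 * π := by positivity
  set E := u - JacAux.W m / (√2 * π) * co with hEd
  have hid : κ * D * ((-1) ^ (m+1) * J) - κ * P * (-1) ^ (m+1) * mm * co =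
      (-1) ^ (m+1) * (κ * mm * P * ((ρ - 1) * co + ρ * (√2 * π) * (E / JacAux.W m))) := by
    have e1 : √π * D * u = ρ * P * co + ρ * P * ((√2 * π) * (E / JacAux.W m)) := by
      rw [hrho]
      have : u = JacAux.W m / (√2 * π) * co + E := by rw [hEd]; ring
      rw [this]
      field_simp
    rw [hJu]
    linear_combination (κ * (-1) ^ (m+1) * mm) * e1
  rw [hid, abs_mul, abs_pow, abs_neg, abs_one, one_pow, one_mul, abs_mul,
    abs_of_pos (by positivity : 0 < κ * mm * P)]
  have hEW : |E / JacAux.W m| ≤ C1 / (n * t) := by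
    rw [abs_div, abs_of_pos hW, div_le_iff₀ hW]
    refine hE.trans (le_of_eq ?_)
    ring
  have hsinv : 1 ≤ (Real.sin t)⁻¹ := (one_le_inv₀ hst).2 (Real.sin_le_one t)
  have htinv : 1 / t ≤ (Real.sin t)⁻¹ := by
    rw [one_div]
    exact inv_anti₀ hst (Real.sin_le ht0.le)
  have hρ1 : |ρ| ≤ 1 + B := by
    have h1 : |ρ| ≤ |ρ - 1| + 1 := by
      calc |ρ| = |(ρ - 1) + 1| := by rw [sub_add_cancel]
        _ ≤ |ρ - 1| + |1| := abs_add_le _ _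
        _ = _ := by rw [abs_one]
    have h2 : B * (1 / n) ≤ B * 1 := by
      gcongr
      rw [div_le_one hL0]; exact hL1
    linarith
  have hmain : |(ρ - 1) * co + ρ * (√2 * π) * (E / JacAux.W m)| ≤
      (B + (1 + B) * (√2 * π) * C1) * (Real.sin t)⁻¹ * n⁻¹ := by
    refine (abs_add_le _ _).trans ?_
    have g1 : |(ρ - 1) * co| ≤ B * (Real.sin t)⁻¹ * n⁻¹ := by
      rw [abs_mul]
      calc |ρ - 1| * |co| ≤ (B * (1 / n)) * 1 := by
            gcongr
            exact Real.abs_cos_le_one _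
        _ = B * 1 * n⁻¹ := by ring
        _ ≤ _ := by gcongr
    have g2 : |ρ * (√2 * π) * (E / JacAux.W m)| ≤ (1 + B) * (√2 * π) * C1 * (Real.sin t)⁻¹ * n⁻¹ := by
      rw [abs_mul, abs_mul, abs_of_pos hq]
      calc |ρ| * (√2 * π) * |E / JacAux.W m| ≤ (1 + B) * (√2 * π) * (C1 / (n * t)) := by gcongr
        _ = (1 + B) * (√2 * π) * C1 * (1 / t) * n⁻¹ := by field_simp
        _ ≤ _ := by gcongr
    linarith
  calc κ * mm * P * |(ρ - 1) * co + ρ * (√2 * π) * (E / JacAux.W m)|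
      ≤ κ * mm * P * ((B + (1 + B) * (√2 * π) * C1) * (Real.sin t)⁻¹ * n⁻¹) := by gcongr
    _ ≤ κ * mm * P * ((B + (1 + B) * (√2 * π) * C1 + 1) * (Real.sin t)⁻¹ * n⁻¹) := by
      gcongr κ * mm * P * (?_ * (Real.sin t)⁻¹ * n⁻¹)
      linarith
    _ = _ := by ring
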